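/- arXiv:2501.09599 — 2 statements merged into one kernel-verified Lean document; each statement's English description precedes it below -/
import Mathlib

section
/- Let μ be a non-atomic self-conformal measure on ℝ (i.e. d = 1). Then there exists α > 0 such that μ(W(Ψ)) = 0 for every decreasing function Ψ : ℕ → (0,∞) satisfying ∑_{n=1}^∞ n^{2α−1} Ψ(n)^α < ∞. -/
noncomputable section
open MeasureTheory Metric Filter Topology

variable {E : Type*} [NormedAddCommGroup E] [NormedSpace ℝ E]

/-- `f` is a contraction with ratio `r ∈ (0,1)`. -/
def IsContractionWith (r : ℝ) (f : E → E) : Prop :=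
  0 < r ∧ r < 1 ∧ ∀ x y, ‖f x - f y‖ ≤ r * ‖x - y‖

/-- `f` is a contracting similarity with ratio `r ∈ (0,1)`. -/
def IsSimilarityWith (r : ℝ) (f : E → E) : Prop :=
  0 < r ∧ r < 1 ∧ ∀ x y, ‖f x - f y‖ = r * ‖x - y‖

/-- A self-conformal IFS. -/
def IsSelfConformalIFS {A : Type*} [Fintype A] (φ : A → E → E) : Prop :=
  2 ≤ Fintype.card A ∧
  (∀ a, ∃ r, IsContractionWith r (φ a)) ∧
  (∀ a, ContDiff ℝ 1 (φ a)) ∧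
  (∀ a x, 0 < ‖fderiv ℝ (φ a) x‖ ∧ ∀ v, ‖fderiv ℝ (φ a) x v‖ = ‖fderiv ℝ (φ a) x‖ * ‖v‖) ∧
  (∃ H α₀ : ℝ, 0 < H ∧ 0 < α₀ ∧ ∀ a x y,
    |‖fderiv ℝ (φ a) x‖ - ‖fderiv ℝ (φ a) y‖| ≤ H * ‖x - y‖ ^ α₀) ∧
  (∃ a₁ a₂ x₁ x₂, φ a₁ x₁ = x₁ ∧ φ a₂ x₂ = x₂ ∧ x₁ ≠ x₂)

/-- A self-similar IFS. -/
def IsSelfSimilarIFS {A : Type*} [Fintype A] (φ : A → E → E) : Prop :=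
  2 ≤ Fintype.card A ∧
  (∀ a, ∃ r, IsSimilarityWith r (φ a)) ∧
  (∃ a₁ a₂ x₁ x₂, φ a₁ x₁ = x₁ ∧ φ a₂ x₂ = x₂ ∧ x₁ ≠ x₂)

/-- The IFS is affinely irreducible: no (nonempty) proper affine subspace is preserved. -/
def AffinelyIrreducible {A : Type*} (φ : A → E → E) : Prop :=
  ¬ ∃ W : AffineSubspace ℝ E, (W : Set E).Nonempty ∧ W ≠ ⊤ ∧
      ∀ a, φ a '' (W : Set E) ⊆ (W : Set E)

/-- Closed `ε`-neighbourhood of an affine subspace. -/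
def affNbhd (W : AffineSubspace ℝ E) (ε : ℝ) : Set E :=
  {y | Metric.infDist y (W : Set E) ≤ ε}

/-- topological support of a measure -/
def msupport [MeasurableSpace E] (μ : Measure E) : Set E :=
  {x | ∀ r : ℝ, 0 < r → 0 < μ (Metric.ball x r)}

/-- distance between two sets -/
def setDist (S T : Set E) : ℝ := sInf (Set.image2 dist S T)

/-- map corresponding to a finite word (as a list) -/
def listMap {A : Type*} (φ : A → E → E) : List A → E → E
  | [] => id
  | a :: l => φ a ∘ listMap φ l

/-- map corresponding to the first `n` letters of an infinite word -/
def wordMap {A : Type*} (φ : A → E → E) : ℕ → (ℕ → A) → E → E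
  | 0, _ => id
  | n + 1, a => φ (a 0) ∘ wordMap φ n (fun k => a (k + 1))

/-- set of `Ψ`-well-approximable vectors in `ℝ^d` -/
def WApprox (d : ℕ) (Ψ : ℕ → ℝ) : Set (EuclideanSpace ℝ (Fin d)) :=
  {x | {pq : (Fin d → ℤ) × ℕ | 0 < pq.2 ∧
        ∀ i, |x i - (pq.1 i : ℝ) / (pq.2 : ℝ)| ≤ Ψ pq.2}.Infinite}

/-- set of singular vectors in `ℝ^d` -/
def Sing (d : ℕ) : Set (EuclideanSpace ℝ (Fin d)) :=
  {x | ∀ c : ℝ, 0 < c → ∃ T : ℝ, 0 < T ∧ ∀ t : ℝ, T ≤ t →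
    ∃ q : ℕ, 0 < q ∧ (q : ℝ) < t ∧
      ∀ i, |(q : ℝ) * x i - round ((q : ℝ) * x i)| ≤ c * t ^ (-(1 : ℝ) / (d : ℝ))}

/-!
The maps with distinct fixed points `x₁`, `x₂` send a bounded invariant set `B`, under iteration,
into small neighbourhoods of `x₁` and `x₂`. A set of small diameter misses one of these
neighbourhoods, so stationarity bounds its mass by `κ < 1` times the mass of sets larger by a fixed
factor; iterating, `μ` satisfies a Frostman condition.

The derivatives are Hölder continuous, so compositions along words distort ratios of distances by a
bounded factor. Pull a `δ`-separated set back along each word `w`, stopped when `φ_w(B)` has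
diameter about `δ`: the preimage of its `ρ`-neighbourhood has diameter `O(ρ / δ)`, and the Frostman
condition bounds the mass of the neighbourhood by `O((ρ / δ) ^ α)`.

Fractions with denominator in `[2 ^ k, 2 ^ (k + 1))` are separated by about `4 ^ (-k)`. The points
within about `Ψ (2 ^ k)` of them thus have mass `O((4 ^ k * Ψ (2 ^ k)) ^ α)`, which is summable by
Cauchy condensation once `α ≤ 1 / 2`, and Borel–Cantelli concludes.
-/

section Stationary

variable {A X : Type*} [Fintype A] [MeasurableSpace X]
  {φ : A → X → X} {p : A → ℝ} {μ : Measure X}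

/-- `μ` is stationary for the iterated function system `φ` with probability vector `p`.
Measurability of the maps is included since `Measure.map` is zero on maps that are not
a.e.-measurable. -/
structure IsStationaryMeasure (φ : A → X → X) (p : A → ℝ) (μ : Measure X) : Prop where
  measurable : ∀ a, Measurable (φ a)
  weight_nonneg : ∀ a, 0 ≤ p a
  sum_weight : ∑ a, p a = 1
  eq_sum_map : μ = ∑ a, ENNReal.ofReal (p a) • μ.map (φ a)

namespace IsStationaryMeasure

lemma weight_le_one (hμ : IsStationaryMeasure φ p μ) (a : A) : p a ≤ 1 :=
  hμ.sum_weight ▸ Finset.single_le_sum (fun b _ => hμ.weight_nonneg b) (Finset.mem_univ a)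

variable [IsFiniteMeasure μ] {S : Set X} {m : ℝ}

lemma measureReal_eq_sum (hμ : IsStationaryMeasure φ p μ) (hS : MeasurableSet S) :
    μ.real S = ∑ a, p a * μ.real (φ a ⁻¹' S) := by
  have hsum : μ S = ∑ a, ENNReal.ofReal (p a) * μ (φ a ⁻¹' S) := by
    conv_lhs => rw [hμ.eq_sum_map]
    simp only [Measure.finsetSum_apply, Measure.smul_apply, smul_eq_mul,
      Measure.map_apply (hμ.measurable _) hS]
  rw [measureReal_def, hsum,
    ENNReal.toReal_sum fun a _ => ENNReal.mul_ne_top ENNReal.ofReal_ne_top (measure_ne_top _ _)]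
  simp only [ENNReal.toReal_mul, ENNReal.toReal_ofReal (hμ.weight_nonneg _), measureReal_def]

lemma measureReal_le_of_preimage_le (hμ : IsStationaryMeasure φ p μ) (hS : MeasurableSet S)
    (hm : ∀ a, μ.real (φ a ⁻¹' S) ≤ m) : μ.real S ≤ m := by
  rw [hμ.measureReal_eq_sum hS]
  calc ∑ a, p a * μ.real (φ a ⁻¹' S) ≤ ∑ a, p a * m :=
        Finset.sum_le_sum fun a _ => mul_le_mul_of_nonneg_left (hm a) (hμ.weight_nonneg a)
    _ = m := by rw [← Finset.sum_mul, hμ.sum_weight, one_mul]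

lemma measureReal_le_of_forall_subset_preimage (hμ : IsStationaryMeasure φ p μ) {T : Set X}
    (hT : MeasurableSet T) (hST : ∀ a, S ⊆ φ a ⁻¹' T) : μ.real S ≤ μ.real T := by
  rw [hμ.measureReal_eq_sum hT]
  calc μ.real S = ∑ a, p a * μ.real S := by rw [← Finset.sum_mul, hμ.sum_weight, one_mul]
    _ ≤ ∑ a, p a * μ.real (φ a ⁻¹' T) := Finset.sum_le_sum fun a _ =>
        mul_le_mul_of_nonneg_left (measureReal_mono (hST a)) (hμ.weight_nonneg a)

lemma measureReal_le_one_sub_mul (hμ : IsStationaryMeasure φ p μ) (hS : MeasurableSet S)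
    (hm : ∀ a, μ.real (φ a ⁻¹' S) ≤ m) {a : A} {t : ℝ}
    (ha : μ.real (φ a ⁻¹' S) ≤ (1 - t) * m) : μ.real S ≤ (1 - p a * t) * m := by
  classical
  have hsplit (f : A → ℝ) : ∑ b, f b = f a + ∑ b ∈ Finset.univ.erase a, f b :=
    (Finset.add_sum_erase _ _ (Finset.mem_univ a)).symm
  have hrest : ∑ b ∈ Finset.univ.erase a, p b = 1 - p a := by
    linarith [hsplit p, hμ.sum_weight]
  rw [hμ.measureReal_eq_sum hS, hsplit]
  calc p a * μ.real (φ a ⁻¹' S) + ∑ b ∈ Finset.univ.erase a, p b * μ.real (φ b ⁻¹' S)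
      ≤ p a * ((1 - t) * m) + ∑ b ∈ Finset.univ.erase a, p b * m :=
        add_le_add (mul_le_mul_of_nonneg_left ha (hμ.weight_nonneg a)) <|
          Finset.sum_le_sum fun b _ => mul_le_mul_of_nonneg_left (hm b) (hμ.weight_nonneg b)
    _ = (1 - p a * t) * m := by rw [← Finset.sum_mul, hrest]; ring

end IsStationaryMeasure

end Stationary

section AttractingBall

variable {A X : Type*} [PseudoMetricSpace X] {φ : A → X → X} {o : X} {r T : ℝ}

lemma exists_dist_le_of_uniform_contraction [Finite A] [Nonempty A] (hr : r < 1)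
    (hφ : ∀ a x y, dist (φ a x) (φ a y) ≤ r * dist x y) (o : X) :
    ∃ T, ∀ a x, dist (φ a x) o ≤ r * dist x o + (1 - r) * T := by
  obtain ⟨b, hb⟩ := Finite.exists_max fun a => dist (φ a o) o
  refine ⟨dist (φ b o) o / (1 - r), fun a x => ?_⟩
  rw [mul_div_cancel₀ _ (sub_pos.2 hr).ne']
  exact (dist_triangle _ (φ a o) _).trans (add_le_add (hφ a x o) (hb a))

lemma mapsTo_closedBall_of_dist_le (hr₀ : 0 ≤ r) (hr : r ≤ 1)
    (hT : ∀ a x, dist (φ a x) o ≤ r * dist x o + (1 - r) * T) {R : ℝ} (hR : T ≤ R) (a : A) :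
    Set.MapsTo (φ a) (closedBall o R) (closedBall o R) := by
  intro x hx
  rw [mem_closedBall] at hx ⊢
  nlinarith [hT a x]

lemma mem_closedBall_of_isFixedPt (hr : r < 1)
    (hT : ∀ a x, dist (φ a x) o ≤ r * dist x o + (1 - r) * T) {a : A} {x : X}
    (hx : φ a x = x) : x ∈ closedBall o T := by
  rw [mem_closedBall]
  have := hT a x
  rw [hx] at this
  nlinarith

variable [MeasurableSpace X] [OpensMeasurableSpace X] [Fintype A] {p : A → ℝ} {μ : Measure X}
  [IsFiniteMeasure μ]

namespace IsStationaryMeasure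

lemma measureReal_closedBall_le_pow (hμ : IsStationaryMeasure φ p μ) (hr₀ : 0 ≤ r)
    (hT : ∀ a x, dist (φ a x) o ≤ r * dist x o + (1 - r) * T) (s : ℝ) (n : ℕ) :
    μ.real (closedBall o (T + s)) ≤ μ.real (closedBall o (T + r ^ n * s)) := by
  induction n with
  | zero => rw [pow_zero, one_mul]
  | succ n ih =>
    refine ih.trans (hμ.measureReal_le_of_forall_subset_preimage measurableSet_closedBall
      fun a x hx => ?_)
    rw [mem_closedBall] at hx
    rw [Set.mem_preimage, mem_closedBall]
    calc dist (φ a x) o ≤ r * dist x o + (1 - r) * T := hT a x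
      _ ≤ r * (T + r ^ n * s) + (1 - r) * T := by gcongr
      _ = T + r ^ (n + 1) * s := by ring

lemma ae_mem_closedBall (hμ : IsStationaryMeasure φ p μ) (hr₀ : 0 ≤ r) (hr : r < 1)
    (hT : ∀ a x, dist (φ a x) o ≤ r * dist x o + (1 - r) * T) {R : ℝ} (hR : T < R) :
    ∀ᵐ x ∂μ, x ∈ closedBall o R := by
  have hle (s : ℝ) : μ.real (closedBall o (T + s)) ≤ μ.real (closedBall o R) := by
    have hlim : Tendsto (fun n => T + r ^ n * s) atTop (𝓝 T) := by
      simpa using ((tendsto_pow_atTop_nhds_zero_of_lt_one hr₀ hr).mul_const s).const_add T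
    obtain ⟨n, hn⟩ := (hlim.eventually_le_const hR).exists
    exact (hμ.measureReal_closedBall_le_pow hr₀ hT s n).trans
      (measureReal_mono (closedBall_subset_closedBall hn))
  have htendsto : Tendsto (fun N : ℕ => μ.real (closedBall o N)) atTop (𝓝 (μ.real Set.univ)) := by
    rw [← iUnion_closedBall_nat o]
    exact (ENNReal.tendsto_toReal (measure_ne_top _ _)).comp <|
      tendsto_measure_iUnion_atTop fun i j hij =>
        closedBall_subset_closedBall (Nat.cast_le.2 hij)
  have hfull : μ.real Set.univ ≤ μ.real (closedBall o R) :=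
    le_of_tendsto' htendsto fun N => by simpa using hle (N - T)
  refine (measureReal_eq_zero_iff (μ := μ)).1 ?_
  change μ.real (closedBall o R)ᶜ = 0
  rw [measureReal_compl measurableSet_closedBall]
  exact le_antisymm (sub_nonpos.2 hfull) (sub_nonneg.2 (measureReal_mono (Set.subset_univ _)))

end IsStationaryMeasure

end AttractingBall

section BiLipschitz

variable {A X : Type*} [PseudoMetricSpace X] {φ : A → X → X} {B : Set X} {l r : ℝ}

/-- The maps `φ a` send `B` to itself and, on `B`, multiply distances by factors in
`[l, r] ⊆ (0, 1)`. -/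
structure IsBiLipschitzIFSOn (φ : A → X → X) (B : Set X) (l r : ℝ) : Prop where
  lower_pos : 0 < l
  lower_le_upper : l ≤ r
  upper_lt_one : r < 1
  mapsTo : ∀ a, Set.MapsTo (φ a) B B
  lower_mul_dist_le : ∀ a, ∀ x ∈ B, ∀ y ∈ B, l * dist x y ≤ dist (φ a x) (φ a y)
  dist_le_upper_mul : ∀ a, ∀ x ∈ B, ∀ y ∈ B, dist (φ a x) (φ a y) ≤ r * dist x y

namespace IsBiLipschitzIFSOn

lemma upper_pos (h : IsBiLipschitzIFSOn φ B l r) : 0 < r := h.lower_pos.trans_le h.lower_le_upper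

lemma lower_lt_one (h : IsBiLipschitzIFSOn φ B l r) : l < 1 :=
  h.lower_le_upper.trans_lt h.upper_lt_one

lemma dist_iterate_le (h : IsBiLipschitzIFSOn φ B l r) (a : A) {x y : X} (hx : x ∈ B)
    (hy : y ∈ B) (n : ℕ) : dist ((φ a)^[n] x) ((φ a)^[n] y) ≤ r ^ n * dist x y := by
  induction n with
  | zero => simp
  | succ n ih =>
    simp only [Function.iterate_succ_apply']
    calc dist (φ a ((φ a)^[n] x)) (φ a ((φ a)^[n] y))
        ≤ r * dist ((φ a)^[n] x) ((φ a)^[n] y) :=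
          h.dist_le_upper_mul a _ ((h.mapsTo a).iterate n hx) _ ((h.mapsTo a).iterate n hy)
      _ ≤ r * (r ^ n * dist x y) := mul_le_mul_of_nonneg_left ih h.upper_pos.le
      _ = r ^ (n + 1) * dist x y := by ring

lemma diam_preimage_inter_le (h : IsBiLipschitzIFSOn φ B l r) (hB : Bornology.IsBounded B)
    {S : Set X} {s : ℝ} (hs : 0 ≤ s) (hS : diam (S ∩ B) ≤ l * s) (a : A) :
    diam (φ a ⁻¹' S ∩ B) ≤ s := by
  refine diam_le_of_forall_dist_le hs fun x hx y hy => ?_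
  have himage : dist (φ a x) (φ a y) ≤ diam (S ∩ B) :=
    dist_le_diam_of_mem (hB.subset Set.inter_subset_right)
      ⟨hx.1, h.mapsTo a hx.2⟩ ⟨hy.1, h.mapsTo a hy.2⟩
  exact le_of_mul_le_mul_left
    ((h.lower_mul_dist_le a x hx.2 y hy.2).trans (himage.trans hS)) h.lower_pos

lemma forall_iterate_notMem_or (h : IsBiLipschitzIFSOn φ B l r) (hB : Bornology.IsBounded B)
    {a₁ a₂ : A} {x₁ x₂ : X} (hx₁ : x₁ ∈ B) (hx₂ : x₂ ∈ B) (hfix₁ : φ a₁ x₁ = x₁)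
    (hfix₂ : φ a₂ x₂ = x₂) {n : ℕ} (hn : r ^ n * diam B < dist x₁ x₂ / 4) {S : Set X}
    (hS : diam (S ∩ B) ≤ dist x₁ x₂ / 4) :
    (∀ x ∈ B, (φ a₁)^[n] x ∉ S) ∨ ∀ x ∈ B, (φ a₂)^[n] x ∉ S := by
  have hnear {a : A} {z : X} (hz : z ∈ B) (hfix : φ a z = z) {x : X} (hx : x ∈ B) :
      dist ((φ a)^[n] x) z < dist x₁ x₂ / 4 := by
    have hiter := h.dist_iterate_le a hx hz n
    rw [Function.iterate_fixed hfix] at hiter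
    exact (hiter.trans (mul_le_mul_of_nonneg_left (dist_le_diam_of_mem hB hx hz)
      (pow_nonneg h.upper_pos.le n))).trans_lt hn
  by_contra! hmeet
  obtain ⟨⟨x, hx, hxS⟩, y, hy, hyS⟩ := hmeet
  have hxy : dist ((φ a₁)^[n] x) ((φ a₂)^[n] y) ≤ diam (S ∩ B) :=
    dist_le_diam_of_mem (hB.subset Set.inter_subset_right)
      ⟨hxS, (h.mapsTo a₁).iterate n hx⟩ ⟨hyS, (h.mapsTo a₂).iterate n hy⟩
  have htriangle := dist_triangle4 x₁ ((φ a₁)^[n] x) ((φ a₂)^[n] y) x₂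
  rw [dist_comm x₁ ((φ a₁)^[n] x)] at htriangle
  linarith [hnear hx₁ hfix₁ hx, hnear hx₂ hfix₂ hy, dist_nonneg (x := x₁) (y := x₂)]

end IsBiLipschitzIFSOn

end BiLipschitz

section Frostman

variable {A X : Type*} [PseudoMetricSpace X] [MeasurableSpace X] {μ : Measure X} {B : Set X}

/-- The mass bound `m` at scale `s`, for sets measured by the diameter of their trace on `B`. -/
def MassBoundOn (μ : Measure X) (B : Set X) (s m : ℝ) : Prop :=
  ∀ S, MeasurableSet S → diam (S ∩ B) ≤ s → μ.real S ≤ m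

/-- Frostman's condition with exponent `α` for a measure `μ` carried by `B`: mass is at most a
constant times diameter to the power `α`. -/
def IsFrostmanOn (μ : Measure X) (B : Set X) (α : ℝ) : Prop :=
  ∃ C > 0, ∀ s > 0, MassBoundOn μ B s (C * s ^ α)

lemma exists_isFrostmanOn_of_geometric [IsProbabilityMeasure μ] {s₀ τ κ : ℝ} (hs₀ : 0 < s₀)
    (hτ₀ : 0 < τ) (hτ : τ < 1) (hκ₀ : 0 < κ) (hκ : κ < 1)
    (hmass : ∀ k : ℕ, MassBoundOn μ B (τ ^ k * s₀) (κ ^ k)) :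
    ∃ α > 0, IsFrostmanOn μ B α := by
  set α := Real.logb τ κ
  have hα : 0 < α := Real.logb_pos_of_base_lt_one hτ₀ hτ hκ₀ hκ
  have hτα : τ ^ α = κ := Real.rpow_logb hτ₀ hτ.ne hκ₀
  refine ⟨α, hα, (τ * s₀)⁻¹ ^ α, by positivity, fun s hs S hS hSs => ?_⟩
  rw [← Real.mul_rpow (by positivity) hs.le, inv_mul_eq_div]
  rcases le_or_gt s s₀ with hss₀ | hs₀s
  · obtain ⟨k, hk_lt, hk_le⟩ := exists_nat_pow_near_of_lt_one (x := s / s₀) (by positivity)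
      ((div_le_one hs₀).2 hss₀) hτ₀ hτ
    calc μ.real S ≤ κ ^ k := hmass k S hS (hSs.trans ((div_le_iff₀ hs₀).1 hk_le))
      _ = (τ ^ k) ^ α := by rw [← hτα, Real.rpow_pow_comm hτ₀.le]
      _ ≤ (s / (τ * s₀)) ^ α := by
        refine Real.rpow_le_rpow (by positivity) ?_ hα.le
        rw [mul_comm τ, ← div_div, le_div_iff₀ hτ₀, ← pow_succ]
        exact hk_lt.le
  · refine measureReal_le_one.trans (Real.one_le_rpow ?_ hα.le)
    rw [one_le_div (by positivity)]
    nlinarith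

variable {φ : A → X → X} {l r : ℝ} [Fintype A] {p : A → ℝ}

namespace IsStationaryMeasure

lemma measureReal_le_of_forall_iterate_notMem [IsFiniteMeasure μ]
    (hμ : IsStationaryMeasure φ p μ) (h : IsBiLipschitzIFSOn φ B l r)
    (hB : Bornology.IsBounded B) (hμB : ∀ᵐ x ∂μ, x ∈ B) {s m : ℝ} (hs : 0 ≤ s)
    (hmass : MassBoundOn μ B s m) (a : A) (n : ℕ) {S : Set X} (hS : MeasurableSet S)
    (hdiam : diam (S ∩ B) ≤ l ^ n * s) (hmiss : ∀ x ∈ B, (φ a)^[n] x ∉ S) :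
    μ.real S ≤ (1 - p a ^ n) * m := by
  induction n generalizing S with
  | zero =>
    have hnull : μ S = 0 := measure_mono_null (fun x hx hxB => hmiss x hxB hx) hμB
    simp [measureReal_def, hnull]
  | succ n ih =>
    have hpre (b : A) : diam (φ b ⁻¹' S ∩ B) ≤ l ^ n * s :=
      h.diam_preimage_inter_le hB (mul_nonneg (pow_nonneg h.lower_pos.le n) hs)
        (by rwa [← mul_assoc, ← pow_succ']) b
    have hl : l ^ n * s ≤ s :=
      mul_le_of_le_one_left hs (pow_le_one₀ h.lower_pos.le h.lower_lt_one.le)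
    rw [pow_succ']
    refine hμ.measureReal_le_one_sub_mul hS
      (fun b => hmass _ (hμ.measurable b hS) ((hpre b).trans hl)) ?_
    refine ih (hμ.measurable a hS) (hpre a) fun x hx hmem => hmiss x hx ?_
    rwa [Function.iterate_succ_apply']

lemma exists_massBoundOn_mul [IsFiniteMeasure μ] (hμ : IsStationaryMeasure φ p μ)
    (h : IsBiLipschitzIFSOn φ B l r) (hB : Bornology.IsBounded B) (hμB : ∀ᵐ x ∂μ, x ∈ B)
    {a₁ a₂ : A} (hp₁ : 0 < p a₁) (hp₂ : 0 < p a₂) {x₁ x₂ : X} (hx₁ : x₁ ∈ B) (hx₂ : x₂ ∈ B)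
    (hfix₁ : φ a₁ x₁ = x₁) (hfix₂ : φ a₂ x₂ = x₂) (hdist : 0 < dist x₁ x₂) :
    ∃ τ κ : ℝ, 0 < τ ∧ τ < 1 ∧ 0 < κ ∧ κ < 1 ∧ ∀ s m, 0 ≤ s → s ≤ dist x₁ x₂ / 4 → 0 ≤ m →
      MassBoundOn μ B s m → MassBoundOn μ B (τ * s) (κ * m) := by
  have hdiam : dist x₁ x₂ ≤ diam B := dist_le_diam_of_mem hB hx₁ hx₂
  obtain ⟨n, hn⟩ := exists_pow_lt_of_lt_one
    (show 0 < dist x₁ x₂ / 4 / diam B by have := hdist.trans_le hdiam; positivity) h.upper_lt_one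
  rw [lt_div_iff₀ (hdist.trans_le hdiam)] at hn
  have hn₀ : n ≠ 0 := by
    rintro rfl
    linarith
  set t := min (p a₁ ^ n) (p a₂ ^ n)
  have ht₀ : 0 < t := lt_min (pow_pos hp₁ n) (pow_pos hp₂ n)
  have ht₁ : t ≤ 1 := (min_le_left _ _).trans (pow_le_one₀ hp₁.le (hμ.weight_le_one a₁))
  have hl₁ : l ^ n < 1 := pow_lt_one₀ h.lower_pos.le h.lower_lt_one hn₀
  refine ⟨l ^ n, 1 - t / 2, pow_pos h.lower_pos n, hl₁, by linarith, by linarith,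
    fun s m hs hs₀ hm hmass S hS hSs => ?_⟩
  have hloss (a : A) (ht : t ≤ p a ^ n) (hmiss : ∀ x ∈ B, (φ a)^[n] x ∉ S) :
      μ.real S ≤ (1 - t / 2) * m := by
    refine (hμ.measureReal_le_of_forall_iterate_notMem h hB hμB hs hmass a n hS hSs hmiss).trans ?_
    exact mul_le_mul_of_nonneg_right (by linarith) hm
  have hSsmall : diam (S ∩ B) ≤ dist x₁ x₂ / 4 :=
    (hSs.trans (mul_le_of_le_one_left hs hl₁.le)).trans hs₀
  rcases h.forall_iterate_notMem_or hB hx₁ hx₂ hfix₁ hfix₂ hn hSsmall with hmiss | hmiss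
  · exact hloss a₁ (min_le_left _ _) hmiss
  · exact hloss a₂ (min_le_right _ _) hmiss

lemma exists_isFrostmanOn [IsProbabilityMeasure μ] (hμ : IsStationaryMeasure φ p μ)
    (h : IsBiLipschitzIFSOn φ B l r) (hB : Bornology.IsBounded B) (hμB : ∀ᵐ x ∂μ, x ∈ B)
    {a₁ a₂ : A} (hp₁ : 0 < p a₁) (hp₂ : 0 < p a₂) {x₁ x₂ : X} (hx₁ : x₁ ∈ B) (hx₂ : x₂ ∈ B)
    (hfix₁ : φ a₁ x₁ = x₁) (hfix₂ : φ a₂ x₂ = x₂) (hdist : 0 < dist x₁ x₂) :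
    ∃ α > 0, IsFrostmanOn μ B α := by
  obtain ⟨τ, κ, hτ₀, hτ, hκ₀, hκ, hstep⟩ :=
    hμ.exists_massBoundOn_mul h hB hμB hp₁ hp₂ hx₁ hx₂ hfix₁ hfix₂ hdist
  refine exists_isFrostmanOn_of_geometric (s₀ := dist x₁ x₂ / 4) (by positivity)
    hτ₀ hτ hκ₀ hκ fun k => ?_
  induction k with
  | zero => exact fun S _ _ => measureReal_le_one.trans_eq (pow_zero κ).symm
  | succ k ih =>
    rw [pow_succ', mul_assoc, pow_succ']
    exact hstep _ _ (by positivity)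
      (mul_le_of_le_one_left (by positivity) (pow_le_one₀ hτ₀.le hτ.le)) (by positivity) ih

end IsStationaryMeasure

end Frostman

section Distortion

/-- On `B`, the map `g` changes ratios of distances by at most the factor `D`. The inequality is
cross-multiplied so that no distance is divided by. -/
def HasDistortionOn {X Y : Type*} [PseudoMetricSpace X] [PseudoMetricSpace Y]
    (g : X → Y) (B : Set X) (D : ℝ) : Prop :=
  ∀ x ∈ B, ∀ y ∈ B, ∀ u ∈ B, ∀ v ∈ B,
    dist (g x) (g y) * dist u v ≤ D * (dist (g u) (g v) * dist x y)

namespace HasDistortionOn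

lemma mono {X Y : Type*} [PseudoMetricSpace X] [PseudoMetricSpace Y] {g : X → Y} {B : Set X}
    {D D' : ℝ} (hg : HasDistortionOn g B D) (hD : D ≤ D') : HasDistortionOn g B D' :=
  fun x hx y hy u hu v hv => (hg x hx y hy u hu v hv).trans <|
    mul_le_mul_of_nonneg_right hD (by positivity)

lemma one_le_of_id {X : Type*} [PseudoMetricSpace X] {B : Set X} {D : ℝ}
    (hid : HasDistortionOn (id : X → X) B D) {x y : X} (hx : x ∈ B) (hy : y ∈ B)
    (hxy : 0 < dist x y) : 1 ≤ D := by
  have := hid x hx y hy x hx y hy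
  simp only [id_eq] at this
  exact (le_mul_iff_one_le_left (mul_pos hxy hxy)).1 this

lemma comp {X Y Z : Type*} [PseudoMetricSpace X] [MetricSpace Y] [PseudoMetricSpace Z]
    {f : Y → Z} {g : X → Y} {B : Set X} {D D' : ℝ} (hf : HasDistortionOn f (g '' B) D')
    (hD' : 0 ≤ D') (hg : HasDistortionOn g B D) : HasDistortionOn (f ∘ g) B (D * D') := by
  intro x hx y hy u hu v hv
  simp only [Function.comp_apply]
  have hf' := hf _ (Set.mem_image_of_mem g hx) _ (Set.mem_image_of_mem g hy)
    _ (Set.mem_image_of_mem g hu) _ (Set.mem_image_of_mem g hv)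
  have hg' := hg x hx y hy u hu v hv
  rcases eq_or_ne (g u) (g v) with huv | huv
  · have hzero : dist (g x) (g y) = 0 ∨ dist u v = 0 := by
      rw [huv, dist_self, zero_mul, mul_zero] at hg'
      exact mul_eq_zero.1 (le_antisymm hg' (by positivity))
    rcases hzero with hxy | huv₀
    · rw [dist_eq_zero.1 hxy, huv]
      simp only [dist_self, zero_mul, mul_zero, le_refl]
    · rw [huv, huv₀]
      simp only [dist_self, zero_mul, mul_zero, le_refl]
  · refine le_of_mul_le_mul_right ?_ (dist_pos.2 huv)
    calc dist (f (g x)) (f (g y)) * dist u v * dist (g u) (g v)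
        = dist (f (g x)) (f (g y)) * dist (g u) (g v) * dist u v := by ring
      _ ≤ D' * (dist (f (g u)) (f (g v)) * dist (g x) (g y)) * dist u v := by gcongr
      _ = D' * dist (f (g u)) (f (g v)) * (dist (g x) (g y) * dist u v) := by ring
      _ ≤ D' * dist (f (g u)) (f (g v)) * (D * (dist (g u) (g v) * dist x y)) := by gcongr
      _ = D * D' * (dist (f (g u)) (f (g v)) * dist x y) * dist (g u) (g v) := by ring

end HasDistortionOn

end Distortion

section Words

variable {A X : Type*} {φ : A → X → X}

lemma listMap_append_singleton (φ : A → X → X) (w : List A) (a : A) :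
    listMap φ (w ++ [a]) = listMap φ w ∘ φ a := by
  induction w with
  | nil => rfl
  | cons b w ih => simp only [List.cons_append, listMap, ih, Function.comp_assoc]

lemma measurable_listMap [MeasurableSpace X] (hφ : ∀ a, Measurable (φ a)) (w : List A) :
    Measurable (listMap φ w) := by
  induction w with
  | nil => exact measurable_id
  | cons a w ih => exact (hφ a).comp ih

variable [PseudoMetricSpace X] {B : Set X} {l r : ℝ}

namespace IsBiLipschitzIFSOn

lemma mapsTo_listMap (h : IsBiLipschitzIFSOn φ B l r) (w : List A) :
    Set.MapsTo (listMap φ w) B B := by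
  induction w with
  | nil => exact Set.mapsTo_id B
  | cons a w ih => exact (h.mapsTo a).comp ih

lemma dist_listMap_le (h : IsBiLipschitzIFSOn φ B l r) (w : List A) {x y : X} (hx : x ∈ B)
    (hy : y ∈ B) : dist (listMap φ w x) (listMap φ w y) ≤ r ^ w.length * dist x y := by
  induction w with
  | nil => simp [listMap]
  | cons a w ih =>
    calc dist (φ a (listMap φ w x)) (φ a (listMap φ w y))
        ≤ r * dist (listMap φ w x) (listMap φ w y) :=
          h.dist_le_upper_mul a _ (h.mapsTo_listMap w hx) _ (h.mapsTo_listMap w hy)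
      _ ≤ r * (r ^ w.length * dist x y) := mul_le_mul_of_nonneg_left ih h.upper_pos.le
      _ = r ^ (a :: w).length * dist x y := by rw [List.length_cons, pow_succ', mul_assoc]

lemma diam_listMap_image_le (h : IsBiLipschitzIFSOn φ B l r) (hB : Bornology.IsBounded B)
    (w : List A) : diam (listMap φ w '' B) ≤ r ^ w.length * diam B := by
  have hr := h.upper_pos
  refine diam_le_of_forall_dist_le (by positivity) ?_
  rintro _ ⟨x, hx, rfl⟩ _ ⟨y, hy, rfl⟩
  exact (h.dist_listMap_le w hx hy).trans <|
    mul_le_mul_of_nonneg_left (dist_le_diam_of_mem hB hx hy) (by positivity)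

lemma div_mul_dist_listMap_le (h : IsBiLipschitzIFSOn φ B l r) {D : ℝ} (hD₀ : 0 < D)
    {w : List A} (hD : HasDistortionOn (listMap φ w) B D) (a : A) {x y : X} (hx : x ∈ B)
    (hy : y ∈ B) (hxy : 0 < dist x y) :
    l / D * dist (listMap φ w x) (listMap φ w y) ≤
      dist (listMap φ (w ++ [a]) x) (listMap φ (w ++ [a]) y) := by
  rw [div_mul_eq_mul_div, div_le_iff₀' hD₀, listMap_append_singleton]
  refine le_of_mul_le_mul_right ?_ hxy
  calc l * dist (listMap φ w x) (listMap φ w y) * dist x y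
      = dist (listMap φ w x) (listMap φ w y) * (l * dist x y) := by ring
    _ ≤ dist (listMap φ w x) (listMap φ w y) * dist (φ a x) (φ a y) :=
        mul_le_mul_of_nonneg_left (h.lower_mul_dist_le a x hx y hy) dist_nonneg
    _ ≤ D * (dist ((listMap φ w ∘ φ a) x) ((listMap φ w ∘ φ a) y) * dist x y) :=
        hD x hx y hy _ (h.mapsTo a hx) _ (h.mapsTo a hy)
    _ = D * dist ((listMap φ w ∘ φ a) x) ((listMap φ w ∘ φ a) y) * dist x y :=
        (mul_assoc _ _ _).symm

end IsBiLipschitzIFSOn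

end Words

section WordDistortion

variable {A X : Type*} [MetricSpace X] {φ : A → X → X} {B : Set X} {l r : ℝ}

namespace IsBiLipschitzIFSOn

lemma hasDistortionOn_listMap_prod (h : IsBiLipschitzIFSOn φ B l r)
    (hB : Bornology.IsBounded B) {K β : ℝ} (hK : 0 ≤ K) (hβ : 0 ≤ β)
    (hφ : ∀ a, ∀ S ⊆ B, HasDistortionOn (φ a) S (1 + K * diam S ^ β)) (w : List A) :
    HasDistortionOn (listMap φ w) B
      (∏ j ∈ Finset.range w.length, (1 + K * (r ^ j * diam B) ^ β)) := by
  have hr := h.upper_pos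
  induction w with
  | nil =>
    intro x _ y _ u _ v _
    simp [listMap, mul_comm]
  | cons a w ih =>
    rw [List.length_cons, Finset.prod_range_succ]
    refine ((hφ a _ (h.mapsTo_listMap w).image_subset).mono ?_).comp (by positivity) ih
    gcongr
    exact h.diam_listMap_image_le hB w

/-- The diameters of the pieces `φ_w(B)` decay geometrically in the length of `w`, so the
distortions of the successive letters have a convergent product. -/
lemma exists_forall_hasDistortionOn_listMap (h : IsBiLipschitzIFSOn φ B l r)
    (hB : Bornology.IsBounded B) {K β : ℝ} (hK : 0 ≤ K) (hβ : 0 < β)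
    (hφ : ∀ a, ∀ S ⊆ B, HasDistortionOn (φ a) S (1 + K * diam S ^ β)) :
    ∃ D, ∀ w, HasDistortionOn (listMap φ w) B D := by
  have hr := h.upper_pos
  have hρ : r ^ β < 1 := Real.rpow_lt_one hr.le h.upper_lt_one hβ
  have hterm (j : ℕ) : K * (r ^ j * diam B) ^ β = K * diam B ^ β * (r ^ β) ^ j := by
    rw [Real.mul_rpow (by positivity) diam_nonneg, Real.rpow_pow_comm hr.le]
    ring
  have hsummable : Summable fun j : ℕ => K * (r ^ j * diam B) ^ β := by
    simp only [hterm]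
    exact (summable_geometric_of_lt_one (by positivity) hρ).mul_left _
  refine ⟨Real.exp (∑' j : ℕ, K * (r ^ j * diam B) ^ β), fun w =>
    (h.hasDistortionOn_listMap_prod hB hK hβ.le hφ w).mono ?_⟩
  refine (Real.prod_one_add_le_exp_sum _ fun j => by positivity).trans (Real.exp_le_exp.2 ?_)
  exact hsummable.sum_le_tsum _ fun j _ => by positivity

end IsBiLipschitzIFSOn

end WordDistortion

section SeparatedDecay

/-- Neighbourhoods of separated sets have small mass: the `ρ`-neighbourhood of a `δ`-separated set
has mass at most a constant times `(ρ / δ) ^ α`, as soon as `δ` is small enough. -/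
def HasSeparatedDecay {X : Type*} [PseudoMetricSpace X] [MeasurableSpace X] (μ : Measure X)
    (α : ℝ) : Prop :=
  ∃ C > 0, ∃ δ₀ > 0, ∀ δ ρ, 0 < δ → δ ≤ δ₀ → 0 < ρ → ∀ S : Set X,
    S.Pairwise (fun s t => δ ≤ dist s t) → μ.real (thickening ρ S) ≤ C * (ρ / δ) ^ α

lemma HasSeparatedDecay.mono_exponent {X : Type*} [PseudoMetricSpace X] [MeasurableSpace X]
    {μ : Measure X} [IsProbabilityMeasure μ] {α β : ℝ} (h : HasSeparatedDecay μ α) (hβ : 0 < β)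
    (hβα : β ≤ α) : HasSeparatedDecay μ β := by
  obtain ⟨C, hC, δ₀, hδ₀, hdecay⟩ := h
  have hα : 0 < α := hβ.trans_le hβα
  refine ⟨C ^ (β / α), by positivity, δ₀, hδ₀, fun δ ρ hδ hδδ₀ hρ S hS => ?_⟩
  calc μ.real (thickening ρ S) ≤ μ.real (thickening ρ S) ^ (β / α) :=
        Real.self_le_rpow_of_le_one measureReal_nonneg measureReal_le_one ((div_le_one hα).2 hβα)
    _ ≤ (C * (ρ / δ) ^ α) ^ (β / α) :=
        Real.rpow_le_rpow measureReal_nonneg (hdecay δ ρ hδ hδδ₀ hρ S hS) (by positivity)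
    _ = C ^ (β / α) * (ρ / δ) ^ β := by
        rw [Real.mul_rpow hC.le (by positivity), ← Real.rpow_mul (by positivity),
          mul_div_cancel₀ _ hα.ne']

lemma dist_lt_two_mul_of_mem_thickening {X : Type*} [PseudoMetricSpace X] {S : Set X} {δ ρ : ℝ}
    (hS : S.Pairwise fun s t => δ ≤ dist s t) {x y : X} (hx : x ∈ thickening ρ S)
    (hy : y ∈ thickening ρ S) (hxy : dist x y + 2 * ρ ≤ δ) : dist x y < 2 * ρ := by
  obtain ⟨s, hs, hxs⟩ := mem_thickening_iff.1 hx
  obtain ⟨t, ht, hyt⟩ := mem_thickening_iff.1 hy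
  rcases eq_or_ne s t with rfl | hst
  · linarith [dist_triangle_right x y s]
  · have htriangle := dist_triangle4 s x y t
    rw [dist_comm s x] at htriangle
    linarith [hS hs ht hst]

lemma HasDistortionOn.diam_preimage_thickening_inter_le {X Y : Type*} [PseudoMetricSpace X]
    [PseudoMetricSpace Y] {g : X → Y} {B : Set X} {D δ ρ η : ℝ} (hg : HasDistortionOn g B D)
    (hD : 0 ≤ D) (hB : Bornology.IsBounded B) {S : Set Y}
    (hS : S.Pairwise fun s t => δ ≤ dist s t) (hρ : 0 ≤ ρ) (hρδ : 4 * ρ ≤ δ) {o o' : X}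
    (ho : o ∈ B) (ho' : o' ∈ B) (hoo' : 0 < dist o o') (hη : 0 < η)
    (hlarge : η ≤ dist (g o) (g o'))
    (hsmall : 2 * D * diam B * dist (g o) (g o') ≤ δ * dist o o') :
    diam (g ⁻¹' thickening ρ S ∩ B) ≤ 2 * D * ρ * dist o o' / η := by
  refine diam_le_of_forall_dist_le (by positivity) fun x hx y hy => ?_
  have hxy : dist x y ≤ diam B := dist_le_diam_of_mem hB hx.2 hy.2
  have hclose : dist (g x) (g y) ≤ δ / 2 := by
    refine le_of_mul_le_mul_right ?_ hoo'
    calc dist (g x) (g y) * dist o o' ≤ D * (dist (g o) (g o') * dist x y) :=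
          hg x hx.2 y hy.2 o ho o' ho'
      _ ≤ D * (dist (g o) (g o') * diam B) := by gcongr
      _ ≤ δ / 2 * dist o o' := by linarith
  have hsame : dist (g x) (g y) < 2 * ρ :=
    dist_lt_two_mul_of_mem_thickening hS hx.1 hy.1 (by linarith)
  rw [le_div_iff₀' hη]
  calc η * dist x y ≤ dist (g o) (g o') * dist x y := by gcongr
    _ ≤ D * (dist (g x) (g y) * dist o o') := hg o ho o' ho' x hx.2 y hy.2
    _ ≤ D * (2 * ρ * dist o o') := by gcongr
    _ = 2 * D * ρ * dist o o' := by ring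

namespace IsStationaryMeasure

/-- Words are extended letter by letter until their size first drops to `η`; one more letter costs
at most the factor `c`, so the size of a stopped word is still at least `c * η`. -/
lemma measureReal_le_of_stopping {A X : Type*} [Fintype A] [MeasurableSpace X] {φ : A → X → X}
    {p : A → ℝ} {μ : Measure X} [IsFiniteMeasure μ] (hμ : IsStationaryMeasure φ p μ) {U : Set X}
    (hU : MeasurableSet U) {size : List A → ℝ} {c η m : ℝ} (hc : 0 ≤ c)
    (hsize : ∀ w a, c * size w ≤ size (w ++ [a])) {N : ℕ}
    (hN : ∀ w : List A, N ≤ w.length → size w ≤ η) (hnil : c * η ≤ size [])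
    (hm : ∀ w, c * η ≤ size w → size w ≤ η → μ.real (listMap φ w ⁻¹' U) ≤ m) :
    μ.real U ≤ m := by
  suffices hwords : ∀ n, ∀ w : List A, N ≤ w.length + n → c * η ≤ size w →
      μ.real (listMap φ w ⁻¹' U) ≤ m from hwords N [] (Nat.le_add_left _ _) hnil
  intro n
  induction n with
  | zero => exact fun w hw hηw => hm w hηw (hN w hw)
  | succ n ih =>
    intro w hw hηw
    rcases le_or_gt (size w) η with hwη | hwη
    · exact hm w hηw hwη
    refine hμ.measureReal_le_of_preimage_le (measurable_listMap hμ.measurable w hU) fun a => ?_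
    rw [← Set.preimage_comp, ← listMap_append_singleton]
    refine ih (w ++ [a]) ?_ ((mul_le_mul_of_nonneg_left hwη.le hc).trans (hsize w a))
    rw [List.length_append, List.length_singleton]
    omega

variable {A X : Type*} [Fintype A] [MetricSpace X] [MeasurableSpace X] [OpensMeasurableSpace X]
  {φ : A → X → X} {p : A → ℝ} {μ : Measure X} {B : Set X} {l r D : ℝ}

lemma measureReal_thickening_le [IsFiniteMeasure μ] (hμ : IsStationaryMeasure φ p μ)
    (h : IsBiLipschitzIFSOn φ B l r) (hB : Bornology.IsBounded B)
    (hD : ∀ w, HasDistortionOn (listMap φ w) B D) {o o' : X} (ho : o ∈ B) (ho' : o' ∈ B)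
    (hoo' : 0 < dist o o') {δ ρ m : ℝ} (hδ : 0 < δ) (hδo : δ ≤ dist o o') (hρ : 0 ≤ ρ)
    (hρδ : 4 * ρ ≤ δ) {S : Set X} (hS : S.Pairwise fun s t => δ ≤ dist s t)
    (hm : MassBoundOn μ B (4 * D ^ 3 * diam B / l * (ρ / δ)) m) :
    μ.real (thickening ρ S) ≤ m := by
  have hl := h.lower_pos
  have hr := h.upper_pos
  have hD₁ : 1 ≤ D := (hD []).one_le_of_id ho ho' hoo'
  have hdiam : dist o o' ≤ diam B := dist_le_diam_of_mem hB ho ho'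
  have hdiam₀ : 0 < diam B := hoo'.trans_le hdiam
  set size : List A → ℝ := fun w => dist (listMap φ w o) (listMap φ w o')
  set η := δ * dist o o' / (2 * D * diam B) with hη_def
  have hη₀ : 0 < η := by positivity
  have hη : l / D * η ≤ dist o o' := by
    have hlD : l / D ≤ 1 := (div_le_one (by positivity)).2 (h.lower_lt_one.le.trans hD₁)
    refine (mul_le_of_le_one_left hη₀.le hlD).trans (div_le_of_le_mul₀ (by positivity)
      hoo'.le ?_)
    rw [mul_comm]
    gcongr
    nlinarith
  obtain ⟨N, hN⟩ := exists_pow_lt_of_lt_one (div_pos hη₀ hoo') h.upper_lt_one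
  rw [lt_div_iff₀ hoo'] at hN
  refine hμ.measureReal_le_of_stopping isOpen_thickening.measurableSet (size := size)
    (c := l / D) (η := η) (N := N) (by positivity)
    (fun w a => h.div_mul_dist_listMap_le (by positivity) (hD w) a ho ho' hoo')
    (fun w hw => ?_) hη fun w hlarge hsmall => ?_
  · calc size w ≤ r ^ w.length * dist o o' := h.dist_listMap_le w ho ho'
      _ ≤ r ^ N * dist o o' :=
        mul_le_mul_of_nonneg_right (pow_le_pow_of_le_one hr.le h.upper_lt_one.le hw) hoo'.le
      _ ≤ η := hN.le
  · refine hm _ (measurable_listMap hμ.measurable w isOpen_thickening.measurableSet) ?_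
    rw [hη_def, le_div_iff₀' (by positivity)] at hsmall
    refine ((hD w).diam_preimage_thickening_inter_le (by positivity) hB hS hρ hρδ ho ho' hoo'
      (by positivity) hlarge hsmall).trans_eq ?_
    rw [hη_def]
    field_simp
    ring

lemma hasSeparatedDecay_of_isFrostmanOn [IsProbabilityMeasure μ] (hμ : IsStationaryMeasure φ p μ)
    (h : IsBiLipschitzIFSOn φ B l r) (hB : Bornology.IsBounded B)
    (hD : ∀ w, HasDistortionOn (listMap φ w) B D) {o o' : X} (ho : o ∈ B) (ho' : o' ∈ B)
    (hoo' : 0 < dist o o') {α : ℝ} (hα : 0 ≤ α) (hFrostman : IsFrostmanOn μ B α) :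
    HasSeparatedDecay μ α := by
  obtain ⟨C, hC, hmass⟩ := hFrostman
  have hl := h.lower_pos
  have hD₁ : 1 ≤ D := (hD []).one_le_of_id ho ho' hoo'
  have hdiam : 0 < diam B := hoo'.trans_le (dist_le_diam_of_mem hB ho ho')
  set M := 4 * D ^ 3 * diam B / l
  have hM : 0 < M := by positivity
  refine ⟨C * M ^ α + 4 ^ α, by positivity, dist o o', hoo', fun δ ρ hδ hδo hρ S hS => ?_⟩
  rw [add_mul]
  rcases le_or_gt (4 * ρ) δ with hρδ | hρδ
  · refine le_add_of_le_of_nonneg ?_ (by positivity)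
    rw [mul_assoc, ← Real.mul_rpow hM.le (by positivity)]
    exact hμ.measureReal_thickening_le h hB hD ho ho' hoo' hδ hδo hρ.le hρδ hS
      (hmass _ (by positivity))
  · refine le_add_of_nonneg_of_le (by positivity) (measureReal_le_one.trans ?_)
    rw [← Real.mul_rpow (by positivity) (by positivity), ← mul_div_assoc]
    exact Real.one_le_rpow ((one_le_div hδ).2 hρδ.le) hα

end IsStationaryMeasure

end SeparatedDecay

section RealDerivative

variable {f : ℝ → ℝ} {S B : Set ℝ}

lemma exists_mem_dist_eq_norm_deriv_mul_dist (hf : Differentiable ℝ f) (hS : Convex ℝ S) {x y : ℝ}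
    (hx : x ∈ S) (hy : y ∈ S) : ∃ z ∈ S, dist (f x) (f y) = ‖deriv f z‖ * dist x y := by
  wlog hxy : x ≤ y generalizing x y
  · simpa only [dist_comm] using this hy hx (le_of_not_ge hxy)
  rcases hxy.eq_or_lt with rfl | hlt
  · exact ⟨x, hx, by rw [dist_self, dist_self, mul_zero]⟩
  obtain ⟨z, hz, hslope⟩ := exists_deriv_eq_slope f hlt hf.continuous.continuousOn
    hf.differentiableOn
  refine ⟨z, hS.ordConnected.out hx hy (Set.Ioo_subset_Icc_self hz), ?_⟩
  rw [dist_comm, dist_comm x, Real.dist_eq, Real.dist_eq, Real.norm_eq_abs, ← abs_mul, hslope,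
    div_mul_cancel₀ _ (sub_pos.2 hlt).ne']

lemma hasDistortionOn_of_norm_deriv_holder (hf : Differentiable ℝ f) (hB : Convex ℝ B)
    {H β c : ℝ} (hβ : 0 ≤ β) (hc : 0 < c) (hlower : ∀ z ∈ B, c ≤ ‖deriv f z‖)
    (hH₀ : 0 ≤ H) (hH : ∀ y ∈ B, ∀ z ∈ B, ‖deriv f y‖ - ‖deriv f z‖ ≤ H * dist y z ^ β)
    (hSB : S ⊆ B) (hS : Bornology.IsBounded S) :
    HasDistortionOn f S (1 + H / c * diam S ^ β) := by
  have hsub : S ⊆ convexHull ℝ S := subset_convexHull ℝ S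
  have hhull : convexHull ℝ S ⊆ B := convexHull_min hSB hB
  intro x hx y hy u hu v hv
  obtain ⟨z, hz, hfxy⟩ := exists_mem_dist_eq_norm_deriv_mul_dist hf (convex_convexHull ℝ S)
    (hsub hx) (hsub hy)
  obtain ⟨w, hw, hfuv⟩ := exists_mem_dist_eq_norm_deriv_mul_dist hf (convex_convexHull ℝ S)
    (hsub hu) (hsub hv)
  have hzw : dist z w ≤ diam S := by
    rw [← convexHull_diam]
    exact dist_le_diam_of_mem (isBounded_convexHull.2 hS) hz hw
  have hratio : ‖deriv f z‖ ≤ (1 + H / c * diam S ^ β) * ‖deriv f w‖ :=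
    calc ‖deriv f z‖ ≤ ‖deriv f w‖ + H * dist z w ^ β := by
          linarith [hH z (hhull hz) w (hhull hw)]
      _ ≤ ‖deriv f w‖ + H * diam S ^ β := by gcongr
      _ = ‖deriv f w‖ + H / c * diam S ^ β * c := by field_simp
      _ ≤ ‖deriv f w‖ + H / c * diam S ^ β * ‖deriv f w‖ := by
          gcongr
          exact hlower w (hhull hw)
      _ = (1 + H / c * diam S ^ β) * ‖deriv f w‖ := by ring
  rw [hfxy, hfuv]
  calc ‖deriv f z‖ * dist x y * dist u v
      ≤ (1 + H / c * diam S ^ β) * ‖deriv f w‖ * dist x y * dist u v := by gcongr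
    _ = (1 + H / c * diam S ^ β) * (‖deriv f w‖ * dist u v * dist x y) := by ring

end RealDerivative

namespace IsSelfConformalIFS

variable {A : Type*} [Fintype A]

lemma nonempty_index {φ : A → E → E} (hΦ : IsSelfConformalIFS φ) : Nonempty A :=
  Fintype.card_pos_iff.1 (zero_lt_two.trans_le hΦ.1)

lemma exists_uniform_contraction {φ : A → E → E} (hΦ : IsSelfConformalIFS φ) :
    ∃ r, 0 < r ∧ r < 1 ∧ ∀ a x y, dist (φ a x) (φ a y) ≤ r * dist x y := by
  have := hΦ.nonempty_index
  choose ratio hpos hlt hcontr using hΦ.2.1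
  obtain ⟨b, hb⟩ := Finite.exists_max ratio
  refine ⟨ratio b, hpos b, hlt b, fun a x y => ?_⟩
  rw [dist_eq_norm, dist_eq_norm]
  exact (hcontr a x y).trans (mul_le_mul_of_nonneg_right (hb a) (norm_nonneg _))

lemma exists_pos_le_norm_fderiv {φ : A → E → E} (hΦ : IsSelfConformalIFS φ) {B : Set E}
    (hB : IsCompact B) : ∃ c > 0, ∀ a, ∀ x ∈ B, c ≤ ‖fderiv ℝ (φ a) x‖ := by
  have := hΦ.nonempty_index
  have hletter (a : A) : ∃ c, 0 < c ∧ ∀ x ∈ B, c ≤ ‖fderiv ℝ (φ a) x‖ :=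
    hB.exists_forall_le' ((hΦ.2.2.1 a).continuous_fderiv one_ne_zero).norm.continuousOn
      fun x _ => (hΦ.2.2.2.1 a x).1
  choose c hpos hc using hletter
  obtain ⟨b, hb⟩ := Finite.exists_min c
  exact ⟨c b, hpos b, fun a x hx => (hb a).trans (hc a x hx)⟩

variable {φ : A → ℝ → ℝ} {B : Set ℝ}

lemma exists_isBiLipschitzIFSOn (hΦ : IsSelfConformalIFS φ) (hB : IsCompact B)
    (hconvex : Convex ℝ B) (hmaps : ∀ a, Set.MapsTo (φ a) B B) {r : ℝ} (hr₀ : 0 < r) (hr : r < 1)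
    (hcontr : ∀ a x y, dist (φ a x) (φ a y) ≤ r * dist x y) :
    ∃ l, IsBiLipschitzIFSOn φ B l r := by
  obtain ⟨c, hc, hlower⟩ := hΦ.exists_pos_le_norm_fderiv hB
  refine ⟨min c r, lt_min hc hr₀, min_le_right _ _, hr, hmaps, fun a x hx y hy => ?_,
    fun a x _ y _ => hcontr a x y⟩
  obtain ⟨z, hz, hxy⟩ := exists_mem_dist_eq_norm_deriv_mul_dist
    ((hΦ.2.2.1 a).differentiable one_ne_zero) hconvex hx hy
  rw [hxy, norm_deriv_eq_norm_fderiv]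
  exact mul_le_mul_of_nonneg_right ((min_le_left _ _).trans (hlower a z hz)) dist_nonneg

lemma exists_forall_hasDistortionOn_listMap (hΦ : IsSelfConformalIFS φ) (hB : IsCompact B)
    (hconvex : Convex ℝ B) {l r : ℝ} (h : IsBiLipschitzIFSOn φ B l r) :
    ∃ D, ∀ w, HasDistortionOn (listMap φ w) B D := by
  obtain ⟨c, hc, hlower⟩ := hΦ.exists_pos_le_norm_fderiv hB
  obtain ⟨H, β, hH₀, hβ, hH⟩ := hΦ.2.2.2.2.1
  refine h.exists_forall_hasDistortionOn_listMap hB.isBounded (div_nonneg hH₀.le hc.le) hβ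
    fun a S hS => hasDistortionOn_of_norm_deriv_holder
      ((hΦ.2.2.1 a).differentiable one_ne_zero) hconvex hβ.le hc (fun z hz => ?_) hH₀.le
      (fun y _ z _ => ?_) hS (hB.isBounded.subset hS)
  · rw [norm_deriv_eq_norm_fderiv]
    exact hlower a z hz
  · rw [norm_deriv_eq_norm_fderiv, norm_deriv_eq_norm_fderiv, dist_eq_norm]
    exact (le_abs_self _).trans (hH a y z)

theorem exists_hasSeparatedDecay (hΦ : IsSelfConformalIFS φ) {p : A → ℝ} (hp : ∀ a, 0 < p a)
    {μ : Measure ℝ} [IsProbabilityMeasure μ] (hμ : IsStationaryMeasure φ p μ) :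
    ∃ α > 0, HasSeparatedDecay μ α := by
  have := hΦ.nonempty_index
  obtain ⟨r, hr₀, hr, hcontr⟩ := hΦ.exists_uniform_contraction
  obtain ⟨T, hT⟩ := exists_dist_le_of_uniform_contraction hr hcontr 0
  have hTR : T < T + 1 := lt_add_one T
  have hcompact := isCompact_closedBall (0 : ℝ) (T + 1)
  have hconvex := convex_closedBall (0 : ℝ) (T + 1)
  obtain ⟨l, h⟩ := hΦ.exists_isBiLipschitzIFSOn hcompact hconvex
    (mapsTo_closedBall_of_dist_le hr₀.le hr.le hT hTR.le) hr₀ hr hcontr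
  obtain ⟨D, hD⟩ := hΦ.exists_forall_hasDistortionOn_listMap hcompact hconvex h
  obtain ⟨a₁, a₂, x₁, x₂, hfix₁, hfix₂, hne⟩ := hΦ.2.2.2.2.2
  have hx₁ := closedBall_subset_closedBall hTR.le (mem_closedBall_of_isFixedPt hr hT hfix₁)
  have hx₂ := closedBall_subset_closedBall hTR.le (mem_closedBall_of_isFixedPt hr hT hfix₂)
  obtain ⟨α, hα, hFrostman⟩ := hμ.exists_isFrostmanOn h hcompact.isBounded
    (hμ.ae_mem_closedBall hr₀.le hr hT hTR) (hp a₁) (hp a₂) hx₁ hx₂ hfix₁ hfix₂ (dist_pos.2 hne)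
  exact ⟨α, hα, hμ.hasSeparatedDecay_of_isFrostmanOn h hcompact.isBounded hD hx₁ hx₂
    (dist_pos.2 hne) hα.le hFrostman⟩

end IsSelfConformalIFS

section RationalApproximation

/-- The real points that are `Ψ`-well approximable, i.e. the set `W(Ψ)` in dimension one. As in the
definition of `W(Ψ)`, pairs `(m, q)` are counted rather than the fractions `m / q`. -/
def wellApproximableReals (Ψ : ℕ → ℝ) : Set ℝ :=
  {x | {pq : ℤ × ℕ | 0 < pq.2 ∧ |x - (pq.1 : ℝ) / (pq.2 : ℝ)| ≤ Ψ pq.2}.Infinite}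

/-- The rational numbers that have a denominator in the dyadic range `[2 ^ k, 2 ^ (k + 1))`, not
necessarily in lowest terms. -/
def rationalShell (k : ℕ) : Set ℝ :=
  {x | ∃ (m : ℤ) (q : ℕ), 2 ^ k ≤ q ∧ q < 2 ^ (k + 1) ∧ x = m / q}

lemma rationalShell_pairwise_le_dist (k : ℕ) :
    (rationalShell k).Pairwise fun s t => (1 / 4 : ℝ) ^ (k + 1) ≤ dist s t := by
  rintro _ ⟨m, q, hkq, hqk, rfl⟩ _ ⟨m', q', hkq', hqk', rfl⟩ hne
  have hq : (0 : ℝ) < q := Nat.cast_pos.2 ((pow_pos two_pos k).trans_le hkq)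
  have hq' : (0 : ℝ) < q' := Nat.cast_pos.2 ((pow_pos two_pos k).trans_le hkq')
  have hnum : m * q' - q * m' ≠ 0 := by
    rw [sub_ne_zero]
    intro h
    refine hne ((div_eq_div_iff hq.ne' hq'.ne').2 ?_)
    rw [mul_comm (m' : ℝ)]
    exact_mod_cast h
  have hone : (1 : ℝ) ≤ |(m : ℝ) * q' - q * m'| := by
    exact_mod_cast Int.one_le_abs hnum
  have hden : (q : ℝ) * q' ≤ 4 ^ (k + 1) := by
    have hqk : (q : ℝ) ≤ 2 ^ (k + 1) := by exact_mod_cast hqk.le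
    have hqk' : (q' : ℝ) ≤ 2 ^ (k + 1) := by exact_mod_cast hqk'.le
    calc (q : ℝ) * q' ≤ 2 ^ (k + 1) * 2 ^ (k + 1) := by gcongr
      _ = 4 ^ (k + 1) := by rw [← mul_pow]; norm_num
  calc (1 / 4 : ℝ) ^ (k + 1) = 1 / 4 ^ (k + 1) := one_div_pow 4 (k + 1)
    _ ≤ |(m : ℝ) * q' - q * m'| / (q * q') := by gcongr
    _ = dist ((m : ℝ) / q) (m' / q') := by
      rw [Real.dist_eq, div_sub_div _ _ hq.ne' hq'.ne', abs_div, abs_of_pos (mul_pos hq hq')]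

lemma finite_setOf_approximation_of_lt (Ψ : ℕ → ℝ) (x : ℝ) (N : ℕ) :
    {pq : ℤ × ℕ | (0 < pq.2 ∧ |x - (pq.1 : ℝ) / (pq.2 : ℝ)| ≤ Ψ pq.2) ∧ pq.2 < N}.Finite := by
  have hnumerators (q : ℕ) : (Set.Icc ⌈(x - Ψ q) * q⌉ ⌊(x + Ψ q) * q⌋ ×ˢ {q}).Finite :=
    (Set.finite_Icc _ _).prod (Set.finite_singleton q)
  refine ((Set.finite_Iio N).biUnion fun q _ => hnumerators q).subset ?_
  rintro ⟨m, q⟩ ⟨⟨hq, hmq⟩, hqN⟩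
  dsimp only at hq hmq hqN
  have hq₀ : (0 : ℝ) < q := Nat.cast_pos.2 hq
  obtain ⟨hlower, hupper⟩ := abs_le.1 hmq
  refine Set.mem_biUnion hqN ⟨⟨Int.ceil_le.2 ?_, Int.le_floor.2 ?_⟩, rfl⟩
  · exact (le_div_iff₀ hq₀).1 (by linarith)
  · exact (div_le_iff₀ hq₀).1 (by linarith)

lemma frequently_mem_thickening_rationalShell {Ψ : ℕ → ℝ} (hpos : ∀ n, 0 < Ψ n)
    (hanti : Antitone Ψ) {x : ℝ} (hx : x ∈ wellApproximableReals Ψ) :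
    ∃ᶠ k in atTop, x ∈ thickening (2 * Ψ (2 ^ k)) (rationalShell k) := by
  rw [frequently_atTop]
  by_contra! hfar
  obtain ⟨K, hK⟩ := hfar
  refine hx ((finite_setOf_approximation_of_lt Ψ x (2 ^ K)).subset fun pq hpq => ⟨hpq, ?_⟩)
  by_contra! hlarge
  have hq := hpq.1.ne'
  have hlog : 2 ^ Nat.log 2 pq.2 ≤ pq.2 := Nat.pow_log_le_self 2 hq
  refine hK _ (Nat.le_log_of_pow_le one_lt_two hlarge) (mem_thickening_iff.2
    ⟨_, ⟨pq.1, pq.2, hlog, Nat.lt_pow_succ_log_self one_lt_two pq.2, rfl⟩, ?_⟩)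
  rw [Real.dist_eq]
  linarith [hpq.2, hanti hlog, hpos (2 ^ Nat.log 2 pq.2)]

lemma summable_condensed_rpow {Ψ : ℕ → ℝ} (hpos : ∀ n, 0 < Ψ n) (hanti : Antitone Ψ) {α : ℝ}
    (hα₀ : 0 ≤ α) (hα : α ≤ 1 / 2)
    (hsum : Summable fun n : ℕ => (n : ℝ) ^ (2 * α - 1) * Ψ n ^ α) :
    Summable fun k : ℕ => ((4 : ℝ) ^ k * Ψ (2 ^ k)) ^ α := by
  have hnonneg (n : ℕ) : 0 ≤ (n : ℝ) ^ (2 * α - 1) * Ψ n ^ α :=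
    mul_nonneg (by positivity) (Real.rpow_nonneg (hpos n).le α)
  refine ((summable_condensed_iff_of_nonneg hnonneg fun m n hm hmn => ?_).2 hsum).congr
    fun k => ?_
  · exact mul_le_mul
      (Real.rpow_le_rpow_of_nonpos (Nat.cast_pos.2 hm) (Nat.cast_le.2 hmn) (by linarith))
      (Real.rpow_le_rpow (hpos n).le (hanti hmn) hα₀) (Real.rpow_nonneg (hpos n).le α)
      (by positivity)
  · have hpow : (2 : ℝ) ^ k * (2 ^ k) ^ (2 * α - 1) = (4 ^ k) ^ α := by
      rw [mul_comm, ← Real.rpow_add_one (by positivity), sub_add_cancel,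
        Real.rpow_mul (by positivity), Real.rpow_two, ← pow_mul, mul_comm k, pow_mul]
      norm_num
    rw [Nat.cast_pow, Nat.cast_ofNat, ← mul_assoc, hpow,
      Real.mul_rpow (by positivity) (hpos _).le]

theorem HasSeparatedDecay.measure_wellApproximableReals_eq_zero {μ : Measure ℝ}
    [IsFiniteMeasure μ] {α : ℝ} (h : HasSeparatedDecay μ α) {Ψ : ℕ → ℝ} (hpos : ∀ n, 0 < Ψ n)
    (hanti : Antitone Ψ) (hsum : Summable fun k : ℕ => ((4 : ℝ) ^ k * Ψ (2 ^ k)) ^ α) :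
    μ (wellApproximableReals Ψ) = 0 := by
  obtain ⟨C, -, δ₀, hδ₀, hdecay⟩ := h
  set δ := min 1 δ₀
  have hδ : 0 < δ := lt_min one_pos hδ₀
  have hquarter (k : ℕ) : (1 / 4 : ℝ) ^ (k + 1) ≤ 1 := pow_le_one₀ (by norm_num) (by norm_num)
  have hmass (k : ℕ) : μ.real (thickening (2 * Ψ (2 ^ k)) (rationalShell k)) ≤
      C * (8 / δ) ^ α * ((4 : ℝ) ^ k * Ψ (2 ^ k)) ^ α := by
    have hΨ := hpos (2 ^ k)
    have hscale : 2 * Ψ (2 ^ k) / (δ * (1 / 4) ^ (k + 1)) = 8 / δ * (4 ^ k * Ψ (2 ^ k)) := by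
      rw [one_div_pow, pow_succ]
      field_simp
      norm_num
    rw [mul_assoc, ← Real.mul_rpow (by positivity) (by positivity), ← hscale]
    refine hdecay _ _ (by positivity)
      ((mul_le_of_le_one_right hδ.le (hquarter k)).trans (min_le_right _ _)) (by positivity) _
      ((rationalShell_pairwise_le_dist k).imp fun s t hst => le_trans ?_ hst)
    exact mul_le_of_le_one_left (by positivity) (min_le_left _ _)
  have hsummable : Summable fun k => μ.real (thickening (2 * Ψ (2 ^ k)) (rationalShell k)) :=
    .of_nonneg_of_le (fun _ => measureReal_nonneg) hmass (hsum.mul_left _)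
  have hBC := hsummable.tsum_ofReal_ne_top
  simp only [ofReal_measureReal (measure_ne_top μ _)] at hBC
  exact measure_mono_null (fun x hx => frequently_mem_thickening_rationalShell hpos hanti hx)
    (measure_setOfPred_frequently_eq_zero hBC)

end RationalApproximation

/-- Diophantine statement for self-conformal measures on ℝ. -/
theorem self_conformal_WPsi_null
    {A : Type*} [Fintype A]
    (φ : A → ℝ → ℝ) (hΦ : IsSelfConformalIFS φ)
    (p : A → ℝ) (hp : ∀ a, 0 < p a) (hp1 : ∑ a, p a = 1)
    (μ : Measure ℝ) [IsProbabilityMeasure μ]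
    (hstat : μ = ∑ a, ENNReal.ofReal (p a) • Measure.map (φ a) μ)
    (hna : ∀ x, μ {x} = 0) :
    ∃ α : ℝ, 0 < α ∧
      ∀ Ψ : ℕ → ℝ, (∀ n, 0 < Ψ n) → Antitone Ψ →
        (Summable fun n : ℕ => (n : ℝ) ^ (2 * α - 1) * Ψ n ^ α) →
        μ {x : ℝ | {pq : ℤ × ℕ | 0 < pq.2 ∧
            |x - (pq.1 : ℝ) / (pq.2 : ℝ)| ≤ Ψ pq.2}.Infinite} = 0 := by
  have hμ : IsStationaryMeasure φ p μ :=
    ⟨fun a => (hΦ.2.2.1 a).continuous.measurable, fun a => (hp a).le, hp1, hstat⟩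
  obtain ⟨α, hα, hdecay⟩ := hΦ.exists_hasSeparatedDecay hp hμ
  have hβ : 0 < min α (1 / 2) := lt_min hα one_half_pos
  refine ⟨min α (1 / 2), hβ, fun Ψ hpos hanti hsum => ?_⟩
  exact (hdecay.mono_exponent hβ (min_le_left _ _)).measure_wellApproximableReals_eq_zero hpos hanti
    (summable_condensed_rpow hpos hanti hβ.le (min_le_right _ _) hsum)
end
end

section
/- Let μ be an affinely irreducible self-similar measure on ℝ^d. Then there exists α > 0 such that μ(W(Ψ)) = 0 for every decreasing function Ψ : ℕ → (0,∞) satisfying ∑_{n=1}^∞ n^{α(d+1)/d − 1} Ψ(n)^α < ∞. -/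
noncomputable section
open MeasureTheory Metric Filter Topology

variable {E : Type*} [NormedAddCommGroup E] [NormedSpace ℝ E]

/-!
Affine irreducibility says that `μ` charges no hyperplane; by compactness, some `c > 0` is such that
`μ` leaves mass at least `c` outside every slab of half-width `c`. Write `μ` as an average of its
images under the words of the IFS whose ratio is about a small constant `ρ`. Each such image is so
small that it cannot meet both a thin slab and the complement of its fixed enlargement, so the
largest mass of a slab drops by a constant factor when the half-width does. Hence slabs of
half-width `ε` have mass `O(ε ^ α)`.

By the simplex lemma, the rational points of denominator at most `Q` in a ball of radius
`≪ Q ^ (-(d + 1) / d)` lie on one hyperplane, since `d + 1` affinely independent ones would give a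
nonzero integer determinant of absolute value less than `1`. Decomposing `μ` along the words of
ratio `≍ Q ^ (-(d + 1) / d)` and applying the slab estimate to each piece bounds the mass of the
`δ`-neighbourhood of these rationals by `O((δ Q ^ ((d + 1) / d)) ^ α)`. With `Q = 2 ^ (k + 1)` and
`δ = Ψ (2 ^ k)` these bounds are summable, by condensation of the series in the hypothesis, and
the Borel–Cantelli lemma concludes.
-/

section Dilation

variable {V : Type*} [NormedAddCommGroup V]

theorem IsSimilarityWith.exists_dilation [Nontrivial V] {r : ℝ} {f : V → V}
    (hf : IsSimilarityWith r f) : ∃ g : V →ᵈ V, ⇑g = f ∧ Dilation.ratio g < 1 := by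
  obtain ⟨hr₀, hr₁, hdist⟩ := hf
  lift r to NNReal using hr₀.le
  have hdist' (x y : V) : dist (f x) (f y) = r * dist x y := by
    simpa only [dist_eq_norm] using hdist x y
  have hr : r ≠ 0 := by exact_mod_cast hr₀.ne'
  refine ⟨Dilation.mkOfDistEq f ⟨r, hr, hdist'⟩, rfl, ?_⟩
  obtain ⟨x, y, hxy⟩ := exists_pair_ne V
  rw [← Dilation.ratio_unique_of_dist_ne_zero (dist_ne_zero.2 hxy) (hdist' x y)]
  exact_mod_cast hr₁

variable [NormedSpace ℝ V]

theorem exists_affineIsometry_dilation_eq_smul [StrictConvexSpace ℝ V] (ψ : V →ᵈ V) :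
    ∃ g : V →ᵃⁱ[ℝ] V, ∀ x, ψ x = (Dilation.ratio ψ : ℝ) • g x := by
  have hs : (Dilation.ratio ψ : ℝ) ≠ 0 := by exact_mod_cast Dilation.ratio_ne_zero ψ
  have hiso : Isometry fun x ↦ (Dilation.ratio ψ : ℝ)⁻¹ • ψ x := Isometry.of_dist_eq fun x y ↦ by
    rw [dist_smul₀, Dilation.dist_eq, norm_inv, NNReal.norm_eq, inv_mul_cancel_left₀ hs]
  exact ⟨hiso.affineIsometryOfStrictConvexSpace, fun x ↦ by simp [smul_inv_smul₀ hs]⟩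

theorem exists_affineMap_coe_eq_dilation [StrictConvexSpace ℝ V] (ψ : V →ᵈ V) :
    ∃ g : V →ᵃ[ℝ] V, ⇑g = ψ := by
  obtain ⟨g, hg⟩ := exists_affineIsometry_dilation_eq_smul ψ
  exact ⟨(Dilation.ratio ψ : ℝ) • g.toAffineMap, funext fun x ↦ by simp [hg]⟩

end Dilation

section Slab

open scoped ENNReal RealInnerProductSpace

variable {V : Type*} [NormedAddCommGroup V] [InnerProductSpace ℝ V]

/-- The closed slab of half-width `ε` around the hyperplane `⟪u, x⟫ = t`. The half-width is the
distance to the hyperplane when `u` is a unit vector, the only case of interest. -/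
def slab (u : V) (t ε : ℝ) : Set V :=
  {x | |⟪u, x⟫ - t| ≤ ε}

theorem mem_slab {u x : V} {t ε : ℝ} : x ∈ slab u t ε ↔ |⟪u, x⟫ - t| ≤ ε :=
  Iff.rfl

theorem isClosed_slab (u : V) (t ε : ℝ) : IsClosed (slab u t ε) :=
  isClosed_le (by fun_prop) continuous_const

theorem slab_mono (u : V) (t : ℝ) : Monotone (slab u t) :=
  fun _ _ h _ hx ↦ le_trans hx h

theorem compl_slab_zero_eq_iUnion (u : V) (t : ℝ) :
    (slab u t 0)ᶜ = ⋃ n : ℕ, (slab u t (1 / (n + 1)))ᶜ := by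
  ext x
  simp only [Set.mem_iUnion, Set.mem_compl_iff, mem_slab, not_le]
  exact ⟨exists_nat_one_div_lt, fun ⟨_, hn⟩ ↦ Nat.one_div_pos_of_nat.trans hn⟩

theorem exists_preimage_slab_eq [FiniteDimensional ℝ V] (ψ : V →ᵈ V) {u : V} (hu : ‖u‖ = 1)
    (t : ℝ) : ∃ (v : V) (s : ℝ), ‖v‖ = 1 ∧
      ∀ ε, ψ ⁻¹' slab u t ε = slab v s (ε / Dilation.ratio ψ) := by
  obtain ⟨g, hg⟩ := exists_affineIsometry_dilation_eq_smul ψ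
  have hr : (0 : ℝ) < Dilation.ratio ψ := by exact_mod_cast Dilation.ratio_pos ψ
  let O : V ≃ₗᵢ[ℝ] V := g.linearIsometry.toLinearIsometryEquiv rfl
  have hgO (x : V) : g x = O x + g 0 := by simpa [O] using g.map_vadd 0 x
  refine ⟨O.symm u, t / Dilation.ratio ψ - ⟪u, g 0⟫, by simp [hu], fun ε ↦ ?_⟩
  ext x
  have hscale : ⟪u, ψ x⟫ - t = Dilation.ratio ψ *
      (⟪O.symm u, x⟫ - (t / Dilation.ratio ψ - ⟪u, g 0⟫)) := by
    rw [O.symm.inner_map_eq_flip, LinearIsometryEquiv.symm_symm, hg, hgO, inner_smul_right,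
      inner_add_right]
    field_simp
    ring
  rw [Set.mem_preimage, mem_slab, mem_slab, hscale, abs_mul, abs_of_pos hr, le_div_iff₀' hr]

variable [MeasurableSpace V]

/-- The largest mass that `μ` gives to a slab of half-width `ε`: the analogue in `V` of Lévy's
concentration function of a probability measure on the line. -/
def slabConcentration (μ : Measure V) (ε : ℝ) : ℝ≥0∞ :=
  ⨆ (u : V) (_ : ‖u‖ = 1) (t : ℝ), μ (slab u t ε)

theorem measure_slab_le_slabConcentration (μ : Measure V) {u : V} (hu : ‖u‖ = 1) (t ε : ℝ) :
    μ (slab u t ε) ≤ slabConcentration μ ε :=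
  le_iSup₂_of_le u hu (le_iSup_of_le t le_rfl)

theorem slabConcentration_mono (μ : Measure V) : Monotone (slabConcentration μ) :=
  fun _ _ h ↦ iSup₂_mono fun u _ ↦ iSup_mono fun t ↦ measure_mono (slab_mono u t h)

theorem slabConcentration_le_one (μ : Measure V) [IsProbabilityMeasure μ] (ε : ℝ) :
    slabConcentration μ ε ≤ 1 :=
  iSup₂_le fun _ _ ↦ iSup_le fun _ ↦ prob_le_one

theorem measure_preimage_slab_le_slabConcentration [FiniteDimensional ℝ V] (μ : Measure V)
    {ψ : V →ᵈ V} {r : ℝ} (hr : 0 < r) (hrψ : r ≤ Dilation.ratio ψ) {u : V} (hu : ‖u‖ = 1) (t : ℝ)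
    {ε : ℝ} (hε : 0 ≤ ε) : μ (ψ ⁻¹' slab u t ε) ≤ slabConcentration μ (ε / r) := by
  obtain ⟨v, s, hv, hpre⟩ := exists_preimage_slab_eq ψ hu t
  calc μ (ψ ⁻¹' slab u t ε) = μ (slab v s (ε / Dilation.ratio ψ)) := by rw [hpre]
    _ ≤ slabConcentration μ (ε / Dilation.ratio ψ) := measure_slab_le_slabConcentration μ hv s _
    _ ≤ slabConcentration μ (ε / r) :=
      slabConcentration_mono μ (div_le_div_of_nonneg_left hε hr hrψ)

theorem measure_preimage_slab_eq_zero_or {μ : Measure V} {R : ℝ} (hR : ∀ᵐ x ∂μ, ‖x‖ ≤ R)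
    {ψ : V →ᵈ V} {c : ℝ} (hψ : Dilation.ratio ψ * R ≤ c / 4) {u : V} (hu : ‖u‖ = 1) (t : ℝ) {ε : ℝ}
    (hε : ε ≤ c / 2) : μ (ψ ⁻¹' slab u t ε) = 0 ∨ μ (ψ ⁻¹' (slab u t c)ᶜ) = 0 := by
  have hdist {x y : V} (hx : ‖x‖ ≤ R) (hy : ‖y‖ ≤ R) : |⟪u, ψ y - ψ x⟫| ≤ c / 2 := by
    calc |⟪u, ψ y - ψ x⟫| ≤ ‖ψ y - ψ x‖ := by simpa [hu] using abs_real_inner_le_norm u (ψ y - ψ x)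
      _ = Dilation.ratio ψ * ‖y - x‖ := by simp only [← dist_eq_norm, Dilation.dist_eq]
      _ ≤ Dilation.ratio ψ * (R + R) := by
        gcongr
        exact (norm_sub_le y x).trans (add_le_add hy hx)
      _ ≤ c / 2 := by linarith
  by_cases hmeet : ∃ x, ‖x‖ ≤ R ∧ ψ x ∈ slab u t ε
  · obtain ⟨x, hxR, hx⟩ := hmeet
    refine .inr (ae_iff.1 (hR.mono fun y hy ↦ ?_ : ∀ᵐ y ∂μ, ψ y ∈ slab u t c))
    have htri := abs_add_le ⟪u, ψ y - ψ x⟫ (⟪u, ψ x⟫ - t)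
    rw [inner_sub_right, sub_add_sub_cancel, ← inner_sub_right] at htri
    exact mem_slab.2 (by linarith [hdist hxR hy, mem_slab.1 hx])
  · push Not at hmeet
    exact .inl (measure_eq_zero_iff_ae_notMem.2 (hR.mono hmeet))

theorem exists_eventually_le_measure_compl_slab {μ : Measure V} {R : ℝ} (hR : ∀ᵐ x ∂μ, ‖x‖ ≤ R)
    {u : V} {t : ℝ} (hut : μ (slab u t 0)ᶜ ≠ 0) :
    ∃ c : ℝ, 0 < c ∧ ∀ᶠ q : V × ℝ in 𝓝 (u, t), ENNReal.ofReal c ≤ μ (slab q.1 q.2 c)ᶜ := by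
  rw [compl_slab_zero_eq_iUnion] at hut
  obtain ⟨n, hn⟩ := exists_measure_pos_of_not_measure_iUnion_null hut
  set δ : ℝ := 1 / (n + 1)
  have hδ : 0 < δ := Nat.one_div_pos_of_nat
  obtain ⟨m, hm₀, hm⟩ := ENNReal.lt_iff_exists_nnreal_btwn.1 hn
  refine ⟨min (δ / 2) m, lt_min (half_pos hδ) (by exact_mod_cast hm₀), ?_⟩
  have hclose : ∀ᶠ q : V × ℝ in 𝓝 (u, t), ‖q.1 - u‖ * R + |q.2 - t| < δ / 2 := by
    refine ((by fun_prop : Continuous fun q : V × ℝ ↦ ‖q.1 - u‖ * R + |q.2 - t|).tendsto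
      (u, t)).eventually_lt_const ?_
    simpa using hδ
  filter_upwards [hclose] with q hq
  calc ENNReal.ofReal (min (δ / 2) m) ≤ m := by
        rw [← ENNReal.ofReal_coe_nnreal]
        exact ENNReal.ofReal_le_ofReal (min_le_right _ _)
    _ ≤ μ (slab u t δ)ᶜ := hm.le
    _ ≤ μ (slab q.1 q.2 (min (δ / 2) m))ᶜ := by
      refine measure_mono_ae ?_
      filter_upwards [hR] with x hx hxu hxq
      have hinner : |⟪q.1, x⟫ - ⟪u, x⟫| ≤ ‖q.1 - u‖ * R := by
        rw [← inner_sub_left]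
        exact (abs_real_inner_le_norm _ _).trans (by gcongr)
      have hq' := (mem_slab.1 hxq).trans (min_le_left _ _)
      refine hxu (mem_slab.2 ?_)
      rw [abs_le] at *
      have := abs_lt.1 (show |q.2 - t| < δ / 2 - ‖q.1 - u‖ * R by linarith)
      constructor <;> linarith

theorem exists_le_measure_compl_slab [FiniteDimensional ℝ V] {μ : Measure V} {R : ℝ} (hR₀ : 0 ≤ R)
    (hR : ∀ᵐ x ∂μ, ‖x‖ ≤ R) (hμ : ∀ u : V, ‖u‖ = 1 → ∀ t, μ (slab u t 0)ᶜ ≠ 0) :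
    ∃ c : ℝ, 0 < c ∧ ∀ u : V, ‖u‖ = 1 → ∀ t, ENNReal.ofReal c ≤ μ (slab u t c)ᶜ := by
  have hanti (q : V × ℝ) {c c' : ℝ} (hc : c ≤ c') (h : ENNReal.ofReal c' ≤ μ (slab q.1 q.2 c')ᶜ) :
      ENNReal.ofReal c ≤ μ (slab q.1 q.2 c)ᶜ :=
    (ENNReal.ofReal_le_ofReal hc).trans
      (h.trans (measure_mono (Set.compl_subset_compl.2 (slab_mono _ _ hc))))
  have := FiniteDimensional.proper_real V
  have hK : IsCompact (sphere (0 : V) 1 ×ˢ closedBall (0 : ℝ) (R + 1)) :=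
    (isCompact_sphere _ _).prod (isCompact_closedBall _ _)
  obtain ⟨c, hc₀, hc⟩ : ∃ c : ℝ, 0 < c ∧ ∀ q ∈ sphere (0 : V) 1 ×ˢ closedBall (0 : ℝ) (R + 1),
      ENNReal.ofReal c ≤ μ (slab q.1 q.2 c)ᶜ := by
    refine hK.induction_on (p := fun S ↦ ∃ c : ℝ, 0 < c ∧ ∀ q ∈ S,
      ENNReal.ofReal c ≤ μ (slab q.1 q.2 c)ᶜ) ⟨1, one_pos, by simp⟩ ?mono ?union ?nhds
    case mono => exact fun S T hST ⟨c, hc₀, hc⟩ ↦ ⟨c, hc₀, fun q hq ↦ hc q (hST hq)⟩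
    case union =>
      rintro S T ⟨c, hc₀, hc⟩ ⟨c', hc₀', hc'⟩
      refine ⟨min c c', lt_min hc₀ hc₀', fun q hq ↦ hq.elim ?_ ?_⟩
      · exact fun hq ↦ hanti q (min_le_left _ _) (hc q hq)
      · exact fun hq ↦ hanti q (min_le_right _ _) (hc' q hq)
    case nhds =>
      rintro ⟨u, t⟩ ⟨hu, -⟩
      obtain ⟨c, hc₀, hc⟩ :=
        exists_eventually_le_measure_compl_slab hR (hμ u (mem_sphere_zero_iff_norm.1 hu) t)
      exact ⟨_, mem_nhdsWithin_of_mem_nhds hc, c, hc₀, fun _ ↦ id⟩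
  refine ⟨min c 1, lt_min hc₀ one_pos, fun u hu t ↦ ?_⟩
  have hc' {t : ℝ} (ht : |t| ≤ R + 1) : ENNReal.ofReal (min c 1) ≤ μ (slab u t (min c 1))ᶜ :=
    hanti (u, t) (min_le_left _ _) (hc (u, t) ⟨by simpa using hu, by simpa using ht⟩)
  rcases le_or_gt |t| (R + 1) with ht | ht
  · exact hc' ht
  · refine (hc' (t := 0) (by simp; linarith)).trans (measure_mono_ae ?_)
    filter_upwards [hR] with x hx _ hxt
    have hinner : |⟪u, x⟫| ≤ R := (abs_real_inner_le_norm u x).trans (by simpa [hu] using hx)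
    have htri : |t| ≤ |⟪u, x⟫| + |⟪u, x⟫ - t| := by
      simpa [abs_sub_comm] using abs_add_le ⟪u, x⟫ (t - ⟪u, x⟫)
    linarith [(mem_slab.1 hxt).trans (min_le_right c 1)]

end Slab

section PowerDecay

open scoped ENNReal

theorem exists_le_rpow_of_le_mul_div {g : ℝ → ℝ≥0∞} (hmono : Monotone g) (hg : ∀ ε, g ε ≤ 1)
    {θ κ ε₀ : ℝ} (hθ₀ : 0 < θ) (hθ₁ : θ < 1) (hκ₀ : 0 < κ) (hκ₁ : κ < 1) (hε₀ : 0 < ε₀)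
    (hstep : ∀ ε, 0 < ε → ε ≤ ε₀ → g ε ≤ ENNReal.ofReal θ * g (ε / κ)) :
    ∃ α C : ℝ, 0 < α ∧ ∀ ε, 0 < ε → g ε ≤ ENNReal.ofReal (C * ε ^ α) := by
  have hiter (n : ℕ) : g (κ ^ n * ε₀) ≤ ENNReal.ofReal (θ ^ n) := by
    induction n with
    | zero => simpa using hg ε₀
    | succ n ih =>
      calc g (κ ^ (n + 1) * ε₀) ≤ ENNReal.ofReal θ * g (κ ^ (n + 1) * ε₀ / κ) :=
            hstep _ (by positivity) (mul_le_of_le_one_left hε₀.le (pow_le_one₀ hκ₀.le hκ₁.le))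
        _ = ENNReal.ofReal θ * g (κ ^ n * ε₀) := by
            rw [pow_succ, mul_right_comm, mul_div_cancel_right₀ _ hκ₀.ne']
        _ ≤ ENNReal.ofReal (θ ^ (n + 1)) := by
            rw [pow_succ', ENNReal.ofReal_mul hθ₀.le]
            gcongr
  have hlogκ : Real.log κ < 0 := Real.log_neg hκ₀ hκ₁
  set α : ℝ := Real.log θ / Real.log κ
  have hα : 0 < α := div_pos_of_neg_of_neg (Real.log_neg hθ₀ hθ₁) hlogκ
  have hκα : κ ^ α = θ := by
    rw [Real.rpow_def_of_pos hκ₀, mul_div_cancel₀ _ hlogκ.ne, Real.exp_log hθ₀]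
  refine ⟨α, (κ * ε₀) ^ (-α), hα, fun ε hε ↦ ?_⟩
  rw [Real.rpow_neg (by positivity), inv_mul_eq_div, ← Real.div_rpow hε.le (by positivity)]
  rcases lt_or_ge ε₀ ε with hlarge | hsmall
  · refine (hg ε).trans (ENNReal.one_le_ofReal.2 (Real.one_le_rpow ?_ hα.le))
    rw [one_le_div (by positivity)]
    exact (mul_le_of_le_one_left hε₀.le hκ₁.le).trans hlarge.le
  · obtain ⟨n, hn₁, hn₂⟩ := exists_nat_pow_near_of_lt_one (div_pos hε hε₀)
      ((div_le_one hε₀).2 hsmall) hκ₀ hκ₁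
    calc g ε ≤ g (κ ^ n * ε₀) := hmono ((div_le_iff₀ hε₀).1 hn₂)
      _ ≤ ENNReal.ofReal (θ ^ n) := hiter n
      _ = ENNReal.ofReal ((κ ^ n) ^ α) := by rw [← hκα, Real.rpow_pow_comm hκ₀.le]
      _ ≤ ENNReal.ofReal ((ε / (κ * ε₀)) ^ α) := by
        gcongr
        rw [le_div_iff₀ (by positivity), ← mul_assoc, ← pow_succ]
        exact ((lt_div_iff₀ hε₀).1 hn₁).le

end PowerDecay

section SelfSimilarMeasure

open scoped ENNReal NNReal RealInnerProductSpace

variable {X A : Type*} [PseudoMetricSpace X]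

/-- The smallest ratio of a finite family of dilations. -/
def minRatio (f : A → X →ᵈ X) : ℝ≥0 :=
  ⨅ a, Dilation.ratio (f a)

theorem minRatio_le (f : A → X →ᵈ X) (a : A) : minRatio f ≤ Dilation.ratio (f a) :=
  ciInf_le (OrderBot.bddBelow _) a

theorem minRatio_pos [Finite A] [Nonempty A] (f : A → X →ᵈ X) : 0 < minRatio f := by
  obtain ⟨a, ha⟩ := exists_eq_ciInf_of_finite (f := fun a ↦ Dilation.ratio (f a))
  exact (Dilation.ratio_pos (f a)).trans_eq ha

variable [Fintype A] [MeasurableSpace X]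

theorem tendsto_measure_compl_closedBall_nat [OpensMeasurableSpace X] (μ : Measure X)
    [IsFiniteMeasure μ] (x₀ : X) :
    Tendsto (fun n : ℕ ↦ μ (closedBall x₀ n)ᶜ) atTop (𝓝 0) := by
  have hinter : ⋂ n : ℕ, (closedBall x₀ (n : ℝ))ᶜ = ∅ := by
    rw [← Set.compl_iUnion, iUnion_closedBall_nat, Set.compl_univ]
  rw [← measure_empty (μ := μ), ← hinter]
  exact tendsto_measure_iInter_atTop
    (fun _ ↦ isClosed_closedBall.measurableSet.compl.nullMeasurableSet)
    (fun m n hmn ↦ Set.compl_subset_compl.2 (closedBall_subset_closedBall (Nat.cast_le.2 hmn)))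
    ⟨0, measure_ne_top _ _⟩

/-- `μ` is stationary for the random iteration of the contracting dilations `f a`, chosen with
probabilities `w a`. Normalizing `μ` is left to a separate `IsProbabilityMeasure` assumption. -/
structure IsSelfSimilarMeasure (f : A → X →ᵈ X) (w : A → ℝ≥0∞) (μ : Measure X) : Prop where
  ratio_lt_one : ∀ a, Dilation.ratio (f a) < 1
  weight_ne_zero : ∀ a, w a ≠ 0
  sum_weight : ∑ a, w a = 1
  eq_sum_map : μ = ∑ a, w a • μ.map (f a)

namespace IsSelfSimilarMeasure

variable {f : A → X →ᵈ X} {w : A → ℝ≥0∞} {μ : Measure X}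

theorem nonempty_index (h : IsSelfSimilarMeasure f w μ) : Nonempty A := by
  by_contra hA
  rw [not_nonempty_iff] at hA
  simpa using h.sum_weight

theorem exists_ratio_le_lt_one (h : IsSelfSimilarMeasure f w μ) :
    ∃ q : ℝ≥0, q < 1 ∧ ∀ a, Dilation.ratio (f a) ≤ q := by
  have := h.nonempty_index
  obtain ⟨a, ha⟩ := Finite.exists_max fun a ↦ Dilation.ratio (f a)
  exact ⟨_, h.ratio_lt_one a, ha⟩

theorem minRatio_lt_one (h : IsSelfSimilarMeasure f w μ) : minRatio f < 1 :=
  let ⟨a⟩ := h.nonempty_index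
  (minRatio_le f a).trans_lt (h.ratio_lt_one a)

theorem exists_forall_mapsTo_closedBall (h : IsSelfSimilarMeasure f w μ) (x₀ : X) :
    ∃ R : ℝ, 0 ≤ R ∧ ∀ ψ ∈ Submonoid.closure (Set.range f),
      Set.MapsTo ψ (closedBall x₀ R) (closedBall x₀ R) := by
  obtain ⟨q, hq₁, hq⟩ := h.exists_ratio_le_lt_one
  obtain ⟨D, hD⟩ := (Set.finite_range fun a ↦ dist (f a x₀) x₀).bddAbove
  have hq₁' : (0 : ℝ) < 1 - q := sub_pos.2 (by exact_mod_cast hq₁)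
  set R : ℝ := max 0 (D / (1 - q))
  have hR : D ≤ (1 - q) * R := by
    rw [← div_le_iff₀' hq₁']
    exact le_max_right _ _
  refine ⟨R, le_max_left _ _, fun ψ hψ ↦ ?_⟩
  induction hψ using Submonoid.closure_induction with
  | mem _ hmem =>
    obtain ⟨a, rfl⟩ := hmem
    intro x hx
    calc dist (f a x) x₀ ≤ dist (f a x) (f a x₀) + dist (f a x₀) x₀ := dist_triangle _ _ _
      _ ≤ q * R + (1 - q) * R := by
        rw [Dilation.dist_eq]
        exact add_le_add (mul_le_mul (hq a) hx dist_nonneg q.2) ((hD ⟨a, rfl⟩).trans hR)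
      _ = R := by ring
  | one => exact Set.mapsTo_id _
  | mul ψ ψ' _ _ hψ hψ' => exact hψ.comp hψ'

variable [BorelSpace X]

theorem map_eq_sum_map_mul (h : IsSelfSimilarMeasure f w μ) (ψ : X →ᵈ X) :
    μ.map ψ = ∑ a, w a • μ.map (ψ * f a) := by
  have hmeas (g : X →ᵈ X) : Measurable g := (Dilation.toContinuous g).measurable
  conv_lhs => rw [h.eq_sum_map]
  rw [Measure.map_finset_sum (hmeas ψ).aemeasurable]
  refine Finset.sum_congr rfl fun a _ ↦ ?_
  rw [Measure.map_smul, Measure.map_map (hmeas ψ) (hmeas (f a)), Dilation.coe_mul]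

-- `μ` is an average of its images under those words in the `f a` whose ratio first drops below `ρ`.
theorem lintegral_le_of_forall_dilation (h : IsSelfSimilarMeasure f w μ) {ρ : ℝ≥0} (hρ₀ : 0 < ρ)
    (hρ₁ : ρ ≤ 1) {g : X → ℝ≥0∞} {M : ℝ≥0∞}
    (hM : ∀ ψ ∈ Submonoid.closure (Set.range f), minRatio f * ρ ≤ Dilation.ratio ψ →
      Dilation.ratio ψ ≤ ρ → ∫⁻ x, g x ∂μ.map ψ ≤ M) :
    ∫⁻ x, g x ∂μ ≤ M := by
  obtain ⟨q, hq₁, hq⟩ := h.exists_ratio_le_lt_one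
  have hword (n : ℕ) : ∀ ψ ∈ Submonoid.closure (Set.range f),
      minRatio f * ρ ≤ Dilation.ratio ψ → Dilation.ratio ψ * q ^ n ≤ ρ →
      ∫⁻ x, g x ∂μ.map ψ ≤ M := by
    induction n with
    | zero => exact fun ψ hψ hlow hup ↦ hM ψ hψ hlow (by simpa using hup)
    | succ n ih =>
      intro ψ hψ hlow hup
      rcases le_or_gt (Dilation.ratio ψ) ρ with hle | hgt
      · exact hM ψ hψ hlow hle
      · have hchild (a : A) : ∫⁻ x, g x ∂μ.map (ψ * f a) ≤ M := by
          refine ih _ (mul_mem hψ (Submonoid.subset_closure ⟨a, rfl⟩)) ?_ ?_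
          · rw [Dilation.ratio_mul, mul_comm]
            exact mul_le_mul' hgt.le (minRatio_le f a)
          · calc Dilation.ratio (ψ * f a) * q ^ n ≤ Dilation.ratio ψ * q * q ^ n := by
                  rw [Dilation.ratio_mul]
                  gcongr
                  exact hq a
              _ ≤ ρ := by rwa [mul_assoc, ← pow_succ']
        calc ∫⁻ x, g x ∂μ.map ψ = ∑ a, w a * ∫⁻ x, g x ∂μ.map (ψ * f a) := by
              rw [h.map_eq_sum_map_mul ψ, lintegral_finsetSum_measure]
              simp only [lintegral_smul_measure, smul_eq_mul]
          _ ≤ ∑ a, w a * M := by gcongr with a; exact hchild a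
          _ = M := by rw [← Finset.sum_mul, h.sum_weight, one_mul]
  obtain ⟨n, hn⟩ := exists_pow_lt_of_lt_one hρ₀ hq₁
  simpa using hword n 1 (one_mem _) (by simpa using mul_le_one' h.minRatio_lt_one.le hρ₁)
    (by simpa using hn.le)

theorem measure_le_of_forall_dilation (h : IsSelfSimilarMeasure f w μ) {ρ : ℝ≥0} (hρ₀ : 0 < ρ)
    (hρ₁ : ρ ≤ 1) {S : Set X} (hS : MeasurableSet S) {M : ℝ≥0∞}
    (hM : ∀ ψ ∈ Submonoid.closure (Set.range f), minRatio f * ρ ≤ Dilation.ratio ψ →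
      Dilation.ratio ψ ≤ ρ → μ (ψ ⁻¹' S) ≤ M) :
    μ S ≤ M := by
  rw [← lintegral_indicator_one hS]
  refine h.lintegral_le_of_forall_dilation hρ₀ hρ₁ fun ψ hψ hlow hup ↦ ?_
  rw [lintegral_indicator_one hS, Measure.map_apply (Dilation.toContinuous ψ).measurable hS]
  exact hM ψ hψ hlow hup

theorem measure_add_mul_measure_le [IsProbabilityMeasure μ] (h : IsSelfSimilarMeasure f w μ)
    {ρ : ℝ≥0} (hρ₀ : 0 < ρ) (hρ₁ : ρ ≤ 1) {S T : Set X} (hS : MeasurableSet S)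
    (hT : MeasurableSet T) {m : ℝ≥0∞}
    (hm : ∀ ψ ∈ Submonoid.closure (Set.range f), minRatio f * ρ ≤ Dilation.ratio ψ →
      Dilation.ratio ψ ≤ ρ → μ (ψ ⁻¹' S) ≤ m ∧ (μ (ψ ⁻¹' S) = 0 ∨ μ (ψ ⁻¹' T) = 0)) :
    μ S + m * μ T ≤ m := by
  have hsplit (ν : Measure X) : ∫⁻ x, S.indicator 1 x + m * T.indicator 1 x ∂ν = ν S + m * ν T := by
    have hmeas {U : Set X} (hU : MeasurableSet U) : Measurable (U.indicator (1 : X → ℝ≥0∞)) :=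
      measurable_one.indicator hU
    rw [lintegral_add_left (hmeas hS), lintegral_const_mul _ (hmeas hT),
      lintegral_indicator_one hS, lintegral_indicator_one hT]
  rw [← hsplit]
  refine h.lintegral_le_of_forall_dilation hρ₀ hρ₁ fun ψ hψ hlow hup ↦ ?_
  have hmeas : Measurable ψ := (Dilation.toContinuous ψ).measurable
  rw [hsplit, Measure.map_apply hmeas hS, Measure.map_apply hmeas hT]
  obtain ⟨hSm, hS₀ | hT₀⟩ := hm ψ hψ hlow hup
  · simpa [hS₀] using mul_le_mul' le_rfl prob_le_one
  · simpa [hT₀] using hSm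

theorem exists_ae_mem_closedBall [IsFiniteMeasure μ] (h : IsSelfSimilarMeasure f w μ) (x₀ : X) :
    ∃ R : ℝ, 0 < R ∧ ∀ᵐ x ∂μ, x ∈ closedBall x₀ R := by
  obtain ⟨R, hR₀, hR⟩ := h.exists_forall_mapsTo_closedBall x₀
  have hle (n : ℕ) : μ (closedBall x₀ (R + 1))ᶜ ≤ μ (closedBall x₀ (n + 1 : ℕ))ᶜ := by
    refine h.measure_le_of_forall_dilation (ρ := ((n + 1 : ℕ) : ℝ≥0)⁻¹) (by positivity)
      (inv_le_one_of_one_le₀ (by simp)) isClosed_closedBall.measurableSet.compl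
      fun ψ hψ _ hup ↦ measure_mono fun x hx hxn ↦ hx ?_
    calc dist (ψ x) x₀ ≤ dist (ψ x₀) x₀ + dist (ψ x) (ψ x₀) := by
          rw [add_comm]; exact dist_triangle _ _ _
      _ ≤ R + ((n + 1 : ℕ) : ℝ)⁻¹ * (n + 1 : ℕ) := by
          rw [Dilation.dist_eq]
          exact add_le_add (hR ψ hψ (mem_closedBall_self hR₀))
            (mul_le_mul (by exact_mod_cast hup) hxn dist_nonneg (by positivity))
      _ = R + 1 := by rw [inv_mul_cancel₀ (by positivity)]
  have hlim := (tendsto_measure_compl_closedBall_nat μ x₀).comp (tendsto_add_atTop_nat 1)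
  exact ⟨R + 1, by positivity, nonpos_iff_eq_zero.1 (ge_of_tendsto' hlim hle)⟩

theorem mapsTo_support (h : IsSelfSimilarMeasure f w μ) (a : A) :
    Set.MapsTo (f a) μ.support μ.support := by
  have hcont := Dilation.toContinuous (f a)
  intro x hx
  rw [Measure.mem_support_iff_forall] at hx ⊢
  intro U hU
  calc 0 < w a * μ (f a ⁻¹' U) :=
        ENNReal.mul_pos (h.weight_ne_zero a) (hx _ (hcont.continuousAt.preimage_mem_nhds hU)).ne'
    _ ≤ w a * μ.map (f a) U :=
        mul_le_mul' le_rfl (Measure.le_map_apply hcont.measurable.aemeasurable U)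
    _ ≤ (∑ b, w b • μ.map (f b)) U := by
        rw [Measure.finsetSum_apply]
        exact Finset.single_le_sum (f := fun b ↦ (w b • μ.map (f b)) U) (fun _ _ ↦ zero_le)
          (Finset.mem_univ a)
    _ = μ U := by rw [← h.eq_sum_map]

end IsSelfSimilarMeasure

variable {V : Type*} [NormedAddCommGroup V] [InnerProductSpace ℝ V] [FiniteDimensional ℝ V]
  [MeasurableSpace V] [BorelSpace V] {f : A → V →ᵈ V} {w : A → ℝ≥0∞} {μ : Measure V}
  [IsProbabilityMeasure μ]

namespace IsSelfSimilarMeasure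

theorem affineSpan_support_eq_top (h : IsSelfSimilarMeasure f w μ)
    (hf : AffinelyIrreducible fun a ↦ ⇑(f a)) : affineSpan ℝ μ.support = ⊤ := by
  have hsupp : μ.support.Nonempty := Measure.nonempty_support (IsProbabilityMeasure.ne_zero μ)
  by_contra htop
  refine hf ⟨_, (affineSpan_nonempty ℝ).2 hsupp, htop, fun a ↦ ?_⟩
  obtain ⟨g, hg⟩ := exists_affineMap_coe_eq_dilation (f a)
  have hmap : (affineSpan ℝ μ.support).map g ≤ affineSpan ℝ μ.support := by
    rw [AffineSubspace.map_span, hg]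
    exact affineSpan_mono ℝ (h.mapsTo_support a).image_subset
  simpa [hg] using SetLike.coe_subset_coe.2 hmap

theorem measure_compl_slab_zero_ne_zero (h : IsSelfSimilarMeasure f w μ)
    (hf : AffinelyIrreducible fun a ↦ ⇑(f a)) {u : V} (hu : ‖u‖ = 1) (t : ℝ) :
    μ (slab u t 0)ᶜ ≠ 0 := by
  intro hnull
  have hsupp : μ.support ⊆ slab u t 0 := Measure.support_subset_of_isClosed (isClosed_slab u t 0)
    (mem_ae_iff.2 hnull)
  have hinner (x : V) : ⟪u, x⟫ = t := by
    have hx : x ∈ affineSpan ℝ μ.support :=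
      h.affineSpan_support_eq_top hf ▸ AffineSubspace.mem_top ..
    refine affineSpan_induction hx (fun x hx ↦ ?_) fun c x y z hx hy hz ↦ ?_
    · simpa [mem_slab, sub_eq_zero] using hsupp hx
    · simp [inner_add_right, inner_sub_right, inner_smul_right, hx, hy, hz]
  have huu : ⟪u, u⟫ = ⟪u, 0⟫ := (hinner u).trans (hinner 0).symm
  simp [hu] at huu

theorem exists_slabConcentration_le_mul (h : IsSelfSimilarMeasure f w μ)
    (hf : AffinelyIrreducible fun a ↦ ⇑(f a)) :
    ∃ θ κ ε₀ : ℝ, 0 < θ ∧ θ < 1 ∧ 0 < κ ∧ κ < 1 ∧ 0 < ε₀ ∧ ∀ ε, 0 < ε → ε ≤ ε₀ →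
      slabConcentration μ ε ≤ ENNReal.ofReal θ * slabConcentration μ (ε / κ) := by
  have := h.nonempty_index
  obtain ⟨R, hR₀, hR⟩ := h.exists_ae_mem_closedBall (0 : V)
  simp only [mem_closedBall_zero_iff] at hR
  obtain ⟨c, hc₀, hc⟩ := exists_le_measure_compl_slab hR₀.le hR
    fun u hu t ↦ h.measure_compl_slab_zero_ne_zero hf hu t
  obtain ⟨ρ, hρ₀, hρ₁, hρ⟩ : ∃ ρ : ℝ≥0, 0 < ρ ∧ ρ ≤ 1 ∧ ρ * R ≤ c / 4 := by
    refine ⟨min 1 (c / (4 * R)).toNNReal, lt_min one_pos (Real.toNNReal_pos.2 (by positivity)),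
      min_le_left _ _, ?_⟩
    rw [← le_div_iff₀ hR₀, div_div]
    simp [Real.coe_toNNReal _ (by positivity : 0 ≤ c / (4 * R))]
  have hκ₀ : 0 < minRatio f * ρ := mul_pos (minRatio_pos f) hρ₀
  refine ⟨max (1 - c) 2⁻¹, (minRatio f * ρ : ℝ≥0), c / 2, by simp, by norm_num [hc₀], hκ₀,
    NNReal.coe_lt_one.2 (mul_lt_one_of_nonneg_of_lt_one_left zero_le h.minRatio_lt_one hρ₁),
    half_pos hc₀, fun ε hε₀ hε ↦ iSup₂_le fun u hu ↦ iSup_le fun t ↦ ?_⟩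
  set m := slabConcentration μ (ε / (minRatio f * ρ : ℝ≥0))
  have hm : m ≤ 1 := slabConcentration_le_one μ _
  have hsum : μ (slab u t ε) + m * μ (slab u t c)ᶜ ≤ m :=
    h.measure_add_mul_measure_le hρ₀ hρ₁ (isClosed_slab u t ε).measurableSet
      (isClosed_slab u t c).measurableSet.compl fun ψ _ hlow hup ↦
        ⟨measure_preimage_slab_le_slabConcentration μ hκ₀ hlow hu t hε₀.le,
          measure_preimage_slab_eq_zero_or hR
            ((mul_le_mul_of_nonneg_right (NNReal.coe_le_coe.2 hup) hR₀.le).trans hρ) hu t hε⟩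
  have hm_top : m * ENNReal.ofReal c ≠ ∞ := ENNReal.mul_ne_top (hm.trans_lt ENNReal.one_lt_top).ne
    ENNReal.ofReal_ne_top
  calc μ (slab u t ε) ≤ m - m * ENNReal.ofReal c :=
        ENNReal.le_sub_of_add_le_right hm_top
          ((add_le_add le_rfl (mul_le_mul' le_rfl (hc u hu t))).trans hsum)
    _ = ENNReal.ofReal (1 - c) * m := by
        rw [ENNReal.ofReal_sub 1 hc₀.le, ENNReal.ofReal_one, mul_comm _ m, ENNReal.mul_sub
          fun _ _ ↦ (hm.trans_lt ENNReal.one_lt_top).ne, mul_one]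
    _ ≤ ENNReal.ofReal (max (1 - c) 2⁻¹) * m := by
        gcongr
        exact le_max_left _ _

theorem exists_slabConcentration_le_rpow (h : IsSelfSimilarMeasure f w μ)
    (hf : AffinelyIrreducible fun a ↦ ⇑(f a)) :
    ∃ α C : ℝ, 0 < α ∧ ∀ ε, 0 < ε →
      slabConcentration μ ε ≤ ENNReal.ofReal (C * ε ^ α) := by
  obtain ⟨θ, κ, ε₀, hθ₀, hθ₁, hκ₀, hκ₁, hε₀, hstep⟩ := h.exists_slabConcentration_le_mul hf
  exact exists_le_rpow_of_le_mul_div (slabConcentration_mono μ) (slabConcentration_le_one μ)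
    hθ₀ hθ₁ hκ₀ hκ₁ hε₀ hstep

end IsSelfSimilarMeasure

end SelfSimilarMeasure

section SimplexLemma

open scoped Nat Matrix RealInnerProductSpace

theorem det_le_factorial_smul_prod {R S n : Type*} [CommRing R] [Nontrivial R] [CommRing S]
    [LinearOrder S] [IsStrictOrderedRing S] [Fintype n] [DecidableEq n] {M : Matrix n n R}
    {abv : AbsoluteValue R S} {b : n → S} (hb : ∀ i j, abv (M i j) ≤ b j) :
    abv M.det ≤ (Fintype.card n)! • ∏ j, b j :=
  calc abv M.det ≤ ∑ σ : Equiv.Perm n, abv (σ.sign • ∏ j, M (σ j) j) := by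
        rw [Matrix.det_apply]
        exact abv.sum_le _ _
    _ = ∑ σ : Equiv.Perm n, ∏ j, abv (M (σ j) j) :=
        Finset.sum_congr rfl fun σ _ ↦ by rw [abv.map_units_int_smul, map_prod]
    _ ≤ ∑ _σ : Equiv.Perm n, ∏ j, b j := by gcongr with σ _ j; exact hb _ j
    _ = (Fintype.card n)! • ∏ j, b j := by simp [Fintype.card_perm]

theorem exists_ne_zero_forall_dotProduct_eq_zero {K n : Type*} [Field K] [Fintype n]
    [DecidableEq n] {T : Set (n → K)} (hT : ∀ M : Matrix n n K, (∀ i, M i ∈ T) → M.det = 0) :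
    ∃ c : n → K, c ≠ 0 ∧ ∀ v ∈ T, c ⬝ᵥ v = 0 := by
  have hspan : Submodule.span K T < ⊤ := by
    refine lt_top_iff_ne_top.2 fun htop ↦ ?_
    obtain ⟨v, hvT, -, hv⟩ := Submodule.exists_fun_fin_finrank_span_eq K T
    let e : n ≃ Fin (Module.finrank K (Submodule.span K T)) :=
      Fintype.equivFinOfCardEq (by rw [htop, finrank_top, Module.finrank_fintype_fun_eq_card])
    have hunit : IsUnit (Matrix.of (v ∘ e)) :=
      Matrix.linearIndependent_rows_iff_isUnit.1 (hv.comp e e.injective)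
    exact ((Matrix.isUnit_iff_isUnit_det _).1 hunit).ne_zero (hT _ fun i ↦ hvT (e i))
  obtain ⟨g, hg₀, hg⟩ := Submodule.exists_le_ker_of_lt_top _ hspan
  refine ⟨(dotProductEquiv K n).symm g, by simpa using hg₀, fun v hv ↦ ?_⟩
  have hgv : g v = 0 := hg (Submodule.subset_span hv)
  rwa [← (dotProductEquiv K n).apply_symm_apply g] at hgv

theorem abs_det_le_of_abs_sub_mul_le {d : ℕ} {M : Matrix (Fin (d + 1)) (Fin (d + 1)) ℝ}
    {Q B : ℝ} (y : Fin d → ℝ) (hQ : ∀ i, |M i 0| ≤ Q)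
    (hB : ∀ i j, |M i (Fin.succ j) - y j * M i 0| ≤ B) :
    |M.det| ≤ (d + 1)! * (Q * B ^ d) := by
  let N : Matrix (Fin (d + 1)) (Fin (d + 1)) ℝ :=
    Matrix.of fun i ↦ Fin.cons (M i 0) fun j ↦ M i j.succ - y j * M i 0
  have hdet : M.det = N.det := by
    rw [← Matrix.det_transpose M, ← Matrix.det_transpose N]
    refine Matrix.det_eq_of_forall_row_eq_smul_add_const (Fin.cons 0 y) 0 rfl fun i j ↦ ?_
    cases i using Fin.cases <;> simp [N]
  have hN : ∀ i j, |N i j| ≤ (Fin.cons Q fun _ ↦ B : Fin (d + 1) → ℝ) j :=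
    fun i ↦ Fin.cases (hQ i) (hB i)
  simpa [hdet, Fin.prod_univ_succ] using det_le_factorial_smul_prod (abv := AbsoluteValue.abs) hN

theorem exists_ne_zero_forall_int_dotProduct_eq_zero {d : ℕ} {Q B : ℝ}
    (hsmall : (d + 1)! * (Q * B ^ d) < 1) (y : Fin d → ℝ) :
    ∃ c : Fin (d + 1) → ℝ, c ≠ 0 ∧ ∀ m : Fin (d + 1) → ℤ, |(m 0 : ℝ)| ≤ Q →
      (∀ j, |(m (Fin.succ j) : ℝ) - y j * m 0| ≤ B) → c ⬝ᵥ (fun i ↦ (m i : ℝ)) = 0 := by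
  let T : Set (Fin (d + 1) → ℝ) := {v | ∃ m : Fin (d + 1) → ℤ, |(m 0 : ℝ)| ≤ Q ∧
    (∀ j, |(m (Fin.succ j) : ℝ) - y j * m 0| ≤ B) ∧ (fun i ↦ (m i : ℝ)) = v}
  have hdet (M : Matrix (Fin (d + 1)) (Fin (d + 1)) ℝ) (hM : ∀ i, M i ∈ T) : M.det = 0 := by
    choose N hQ hB hN using hM
    obtain rfl : (Int.castRingHom ℝ).mapMatrix (Matrix.of N) = M := funext hN
    have hlt := (abs_det_le_of_abs_sub_mul_le
      (M := (Int.castRingHom ℝ).mapMatrix (Matrix.of N)) y hQ hB).trans_lt hsmall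
    rw [← RingHom.map_det, eq_intCast] at hlt ⊢
    exact_mod_cast Int.abs_lt_one_iff.1 (by exact_mod_cast hlt)
  obtain ⟨c, hc₀, hc⟩ := exists_ne_zero_forall_dotProduct_eq_zero hdet
  exact ⟨c, hc₀, fun m hQ hB ↦ hc _ ⟨m, hQ, hB, rfl⟩⟩

theorem exists_forall_inner_toLp_div_eq {d : ℕ} (hd : 0 < d) {Q η : ℝ}
    (hsmall : (d + 1)! * (Q * (Q * η) ^ d) < 1) (y : EuclideanSpace ℝ (Fin d)) :
    ∃ (u : EuclideanSpace ℝ (Fin d)) (t : ℝ), ‖u‖ = 1 ∧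
      ∀ (z : Fin d → ℤ) (q : ℕ), 0 < q → q ≤ Q → (∀ i, |(z i / q : ℝ) - y i| ≤ η) →
        ⟪u, WithLp.toLp 2 fun i ↦ (z i / q : ℝ)⟫ = t := by
  have : NeZero d := ⟨hd.ne'⟩
  obtain ⟨c, hc₀, hc⟩ := exists_ne_zero_forall_int_dotProduct_eq_zero hsmall y
  set v : EuclideanSpace ℝ (Fin d) := WithLp.toLp 2 fun j ↦ c j.succ with hv
  have hinner (z : Fin d → ℤ) (q : ℕ) (hq : 0 < q) (hqQ : q ≤ Q)
      (hz : ∀ i, |(z i / q : ℝ) - y i| ≤ η) : ⟪v, WithLp.toLp 2 fun i ↦ (z i / q : ℝ)⟫ = -c 0 := by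
    have hq' : (0 : ℝ) < q := by exact_mod_cast hq
    have hz' (j : Fin d) : |(z j - y j * q : ℝ)| ≤ Q * η := by
      rw [show (z j - y j * q : ℝ) = q * (z j / q - y j) by field_simp, abs_mul, abs_of_pos hq']
      exact mul_le_mul hqQ (hz j) (abs_nonneg _) (hq'.le.trans hqQ)
    have hdot : c 0 * q + ∑ j : Fin d, c j.succ * z j = 0 := by
      simpa [dotProduct, Fin.sum_univ_succ] using
        hc (Fin.cons q z) (by simpa using hqQ) (by simpa using hz')
    calc ⟪v, WithLp.toLp 2 fun i ↦ (z i / q : ℝ)⟫ = (∑ j : Fin d, c j.succ * z j) / q := by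
          simp [hv, PiLp.inner_apply, Finset.sum_div, mul_comm, mul_div_assoc]
      _ = -c 0 := by rw [div_eq_iff hq'.ne']; linarith
  rcases eq_or_ne v 0 with hv₀ | hv₀
  · obtain ⟨u, hu⟩ := exists_norm_eq (EuclideanSpace ℝ (Fin d)) zero_le_one
    refine ⟨u, 0, hu, fun z q hq hqQ hz ↦ absurd (funext (Fin.cases ?_ ?_)) hc₀⟩
    · simpa [hv₀] using hinner z q hq hqQ hz
    · exact fun j ↦ congrArg (· j) hv₀
  · refine ⟨‖v‖⁻¹ • v, ‖v‖⁻¹ * -c 0, norm_smul_inv_norm hv₀, fun z q hq hqQ hz ↦ ?_⟩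
    rw [real_inner_smul_left, hinner z q hq hqQ hz]

theorem abs_inner_le_card_mul_of_abs_le {ι : Type*} [Fintype ι] {u v : EuclideanSpace ℝ ι}
    (hu : ‖u‖ = 1) {δ : ℝ} (hv : ∀ i, |v i| ≤ δ) : |⟪u, v⟫| ≤ Fintype.card ι * δ := by
  calc |⟪u, v⟫| ≤ ∑ i, |u i| * |v i| := by
        simpa [PiLp.inner_apply, abs_mul, mul_comm] using
          Finset.abs_sum_le_sum_abs (fun i ↦ u i * v i) Finset.univ
    _ ≤ ∑ _i : ι, 1 * δ := by
        gcongr with i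
        · exact (PiLp.norm_apply_le u i).trans_eq hu
        · exact hv i
    _ = Fintype.card ι * δ := by simp

/-- The points of `ℝ^d` which are `δ`-close, in each coordinate, to a rational point with
denominator at most `Q`. -/
def nearRat (d : ℕ) (Q δ : ℝ) : Set (EuclideanSpace ℝ (Fin d)) :=
  {x | ∃ (z : Fin d → ℤ) (q : ℕ), 0 < q ∧ q ≤ Q ∧ ∀ i, |x i - z i / q| ≤ δ}

theorem measurableSet_nearRat (d : ℕ) (Q δ : ℝ) : MeasurableSet (nearRat d Q δ) := by
  simp only [nearRat, Set.ofPred_exists, Set.ofPred_and, Set.ofPred_forall]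
  measurability

theorem exists_nearRat_inter_closedBall_subset_slab {d : ℕ} (hd : 0 < d) {Q η δ : ℝ}
    (hsmall : (d + 1)! * (Q * (Q * (η + δ)) ^ d) < 1) (y : EuclideanSpace ℝ (Fin d)) :
    ∃ (u : EuclideanSpace ℝ (Fin d)) (t : ℝ), ‖u‖ = 1 ∧
      nearRat d Q δ ∩ closedBall y η ⊆ slab u t (d * δ) := by
  obtain ⟨u, t, hu, ht⟩ := exists_forall_inner_toLp_div_eq hd hsmall y
  refine ⟨u, t, hu, fun x ⟨⟨z, q, hq, hqQ, hz⟩, hxy⟩ ↦ ?_⟩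
  have hclose (i : Fin d) : |(z i / q : ℝ) - y i| ≤ η + δ := by
    have hxi : |x i - y i| ≤ η :=
      (PiLp.norm_apply_le (x - y) i).trans (mem_closedBall_iff_norm.1 hxy)
    rw [add_comm]
    refine (abs_sub_le _ (x i) _).trans (add_le_add ?_ hxi)
    rw [abs_sub_comm]
    exact hz i
  rw [mem_slab, ← ht z q hq hqQ hclose, ← inner_sub_right]
  simpa using abs_inner_le_card_mul_of_abs_le hu hz

theorem exists_forall_rpow_mul_le_imp_lt_one {d : ℕ} (hd : 0 < d) :
    ∃ τ ∈ Set.Ioo (0 : ℝ) 1, ∀ Q s : ℝ, 0 < Q → 0 ≤ s → Q ^ ((d + 1) / d : ℝ) * s ≤ τ →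
      (d + 1)! * (Q * (Q * s) ^ d) < 1 := by
  have hlim : Tendsto (fun τ : ℝ ↦ (d + 1)! * τ ^ d) (𝓝 0) (𝓝 0) :=
    Continuous.tendsto' (by fun_prop) 0 0 (by simp [hd.ne'])
  obtain ⟨τ, hτ, hτ₀₁⟩ := ((hlim.mono_left nhdsWithin_le_nhds).eventually_lt_const one_pos |>.and
    (Ioo_mem_nhdsGT one_pos)).exists
  refine ⟨τ, hτ₀₁, fun Q s hQ hs hle ↦ ?_⟩
  have hpow : (Q ^ ((d + 1) / d : ℝ)) ^ d = Q ^ (d + 1) := by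
    rw [← Real.rpow_mul_natCast hQ.le, div_mul_cancel₀ _ (by positivity)]
    exact_mod_cast Real.rpow_natCast Q (d + 1)
  calc (d + 1)! * (Q * (Q * s) ^ d) = (d + 1)! * (Q ^ ((d + 1) / d : ℝ) * s) ^ d := by
        rw [mul_pow (Q ^ _) s, hpow]
        ring
    _ ≤ (d + 1)! * τ ^ d := by gcongr
    _ < 1 := hτ

end SimplexLemma

namespace IsSelfSimilarMeasure

open scoped ENNReal NNReal Nat

variable {d : ℕ} {A : Type*} [Fintype A]
  {f : A → EuclideanSpace ℝ (Fin d) →ᵈ EuclideanSpace ℝ (Fin d)} {w : A → ℝ≥0∞}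
  {μ : Measure (EuclideanSpace ℝ (Fin d))}

theorem measure_nearRat_le_slabConcentration (h : IsSelfSimilarMeasure f w μ) (hd : 0 < d) {R : ℝ}
    (hR : ∀ᵐ x ∂μ, x ∈ closedBall 0 R) {ρ : ℝ≥0} (hρ₀ : 0 < ρ) (hρ₁ : ρ ≤ 1) {Q δ : ℝ}
    (hδ : 0 ≤ δ) (hsmall : (d + 1)! * (Q * (Q * (ρ * R + δ)) ^ d) < 1) :
    μ (nearRat d Q δ) ≤ slabConcentration μ (d * δ / (minRatio f * ρ : ℝ≥0)) := by
  have := h.nonempty_index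
  refine h.measure_le_of_forall_dilation hρ₀ hρ₁ (measurableSet_nearRat d Q δ)
    fun ψ _ hlow hup ↦ ?_
  obtain ⟨u, t, hu, hslab⟩ := exists_nearRat_inter_closedBall_subset_slab hd hsmall (ψ 0)
  calc μ (ψ ⁻¹' nearRat d Q δ) ≤ μ (ψ ⁻¹' slab u t (d * δ)) := by
        refine measure_mono_ae (hR.mono fun x hx hxn ↦ hslab ⟨hxn, ?_⟩)
        rw [mem_closedBall, Dilation.dist_eq]
        exact mul_le_mul hup hx dist_nonneg ρ.2
    _ ≤ slabConcentration μ (d * δ / (minRatio f * ρ : ℝ≥0)) :=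
        measure_preimage_slab_le_slabConcentration μ (mul_pos (minRatio_pos f) hρ₀) hlow hu t
          (by positivity)

theorem exists_measure_nearRat_le_slabConcentration_mul [IsFiniteMeasure μ]
    (h : IsSelfSimilarMeasure f w μ) (hd : 0 < d) :
    ∃ κ c : ℝ, 0 < κ ∧ 0 < c ∧ ∀ Q δ : ℝ, 1 ≤ Q → 0 ≤ δ → δ * Q ^ ((d + 1) / d : ℝ) ≤ κ →
      μ (nearRat d Q δ) ≤ slabConcentration μ (c * (δ * Q ^ ((d + 1) / d : ℝ))) := by
  have := h.nonempty_index
  obtain ⟨R, hR₀, hR⟩ := h.exists_ae_mem_closedBall 0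
  obtain ⟨τ, ⟨hτ₀, hτ₁⟩, hτ⟩ := exists_forall_rpow_mul_le_imp_lt_one hd
  have hr : (0 : ℝ) < minRatio f := minRatio_pos f
  obtain ⟨κ, hκ, hκR⟩ : ∃ κ : ℝ, 0 < κ ∧ κ * (R + 1) = τ :=
    ⟨τ / (R + 1), by positivity, div_mul_cancel₀ _ (by positivity)⟩
  refine ⟨κ, d / (minRatio f * κ), hκ, by positivity, fun Q δ hQ hδ hδκ ↦ ?_⟩
  set T : ℝ := Q ^ ((d + 1) / d : ℝ)
  have hT : 1 ≤ T := Real.one_le_rpow hQ (by positivity)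
  have hT₀ : 0 < T := one_pos.trans_le hT
  obtain ⟨ρ, hρ⟩ : ∃ ρ : ℝ≥0, (ρ : ℝ) = κ / T := ⟨⟨κ / T, by positivity⟩, rfl⟩
  have hρ₀ : (0 : ℝ) < ρ := hρ ▸ div_pos hκ hT₀
  have hρ₁ : (ρ : ℝ) ≤ 1 := by
    rw [hρ, div_le_one hT₀]
    nlinarith
  have hscale : T * (ρ * R + δ) ≤ τ := by
    rw [hρ, ← hκR]
    field_simp
    linarith
  calc μ (nearRat d Q δ) ≤ slabConcentration μ (d * δ / (minRatio f * ρ : ℝ≥0)) :=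
        h.measure_nearRat_le_slabConcentration hd hR hρ₀ hρ₁ hδ
          (hτ Q _ (one_pos.trans_le hQ) (by positivity) hscale)
    _ = slabConcentration μ (d / (minRatio f * κ) * (δ * T)) := by
        push_cast
        rw [hρ]
        congr 1
        field_simp

theorem exists_measure_nearRat_le_rpow [IsProbabilityMeasure μ] (h : IsSelfSimilarMeasure f w μ)
    (hf : AffinelyIrreducible fun a ↦ ⇑(f a)) (hd : 0 < d) :
    ∃ α C : ℝ, 0 < α ∧ ∀ Q δ : ℝ, 1 ≤ Q → 0 < δ →
      μ (nearRat d Q δ) ≤ ENNReal.ofReal (C * (δ * Q ^ ((d + 1) / d : ℝ)) ^ α) := by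
  obtain ⟨α, C, hα, hconc⟩ := h.exists_slabConcentration_le_rpow hf
  obtain ⟨κ, c, hκ, hc, hslab⟩ := h.exists_measure_nearRat_le_slabConcentration_mul hd
  refine ⟨α, max (C * c ^ α) (κ⁻¹ ^ α), hα, fun Q δ hQ hδ ↦ ?_⟩
  have hT : 0 < Q ^ ((d + 1) / d : ℝ) := Real.rpow_pos_of_pos (one_pos.trans_le hQ) _
  set s : ℝ := δ * Q ^ ((d + 1) / d : ℝ)
  have hs : 0 < s := mul_pos hδ hT
  rcases le_or_gt s κ with hsmall | hlarge
  · calc μ (nearRat d Q δ) ≤ slabConcentration μ (c * s) := hslab Q δ hQ hδ.le hsmall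
      _ ≤ ENNReal.ofReal (C * (c * s) ^ α) := hconc _ (by positivity)
      _ = ENNReal.ofReal (C * c ^ α * s ^ α) := by rw [Real.mul_rpow hc.le hs.le, mul_assoc]
      _ ≤ _ := by
        gcongr
        exact le_max_left _ _
  · calc μ (nearRat d Q δ) ≤ 1 := prob_le_one
      _ ≤ ENNReal.ofReal (κ⁻¹ ^ α * s ^ α) := by
        rw [ENNReal.one_le_ofReal, ← Real.mul_rpow (by positivity) hs.le]
        exact Real.one_le_rpow ((one_le_inv_mul₀ hκ).2 hlarge.le) hα.le
      _ ≤ _ := by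
        gcongr
        exact le_max_right _ _

end IsSelfSimilarMeasure

section BorelCantelli

theorem summable_sum_Ico_of_monotone {F : ℕ → ℝ} (hF₀ : ∀ n, 0 ≤ F n) (hF : Summable F) {u : ℕ → ℕ}
    (hu : Monotone u) : Summable fun k ↦ ∑ n ∈ Finset.Ico (u k) (u (k + 1)), F n := by
  have hsum (K : ℕ) : ∑ k ∈ Finset.range K, ∑ n ∈ Finset.Ico (u k) (u (k + 1)), F n =
      ∑ n ∈ Finset.Ico (u 0) (u K), F n := by
    induction K with
    | zero => simp
    | succ K ih =>
      rw [Finset.sum_range_succ, ih, Finset.sum_Ico_consecutive _ (hu K.zero_le) (hu K.le_succ)]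
  refine summable_of_sum_range_le (c := ∑' n, F n) (fun k ↦ Finset.sum_nonneg fun n _ ↦ hF₀ n)
    fun K ↦ ?_
  exact (hsum K).trans_le (hF.sum_le_tsum _ fun n _ ↦ hF₀ n)

theorem summable_two_pow_rpow_mul {g : ℕ → ℝ} (hg₀ : ∀ n, 0 ≤ g n) (hg : Antitone g) {β : ℝ}
    (hβ : 0 ≤ β) (hs : Summable fun n : ℕ ↦ (n : ℝ) ^ (β - 1) * g n) :
    Summable fun k : ℕ ↦ ((2 : ℝ) ^ k) ^ β * g (2 ^ k) := by
  have hblock (k : ℕ) : ((2 : ℝ) ^ (k + 1)) ^ β * g (2 ^ (k + 1)) ≤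
      2 * 2 ^ β * ∑ n ∈ Finset.Ico (2 ^ k : ℕ) (2 ^ (k + 1)), (n : ℝ) ^ (β - 1) * g n := by
    have hterm : ∀ n ∈ Finset.Ico (2 ^ k : ℕ) (2 ^ (k + 1)),
        ((2 : ℝ) ^ k) ^ β / 2 ^ (k + 1) * g (2 ^ (k + 1)) ≤ (n : ℝ) ^ (β - 1) * g n := by
      intro n hn
      obtain ⟨hn₁, hn₂⟩ := Finset.mem_Ico.1 hn
      have hn₀ : (0 : ℝ) < n := by exact_mod_cast (Nat.two_pow_pos k).trans_le hn₁
      rw [Real.rpow_sub_one hn₀.ne']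
      have := hg₀ (2 ^ (k + 1))
      gcongr
      · exact_mod_cast hn₁
      · exact_mod_cast hn₂.le
      · exact hg hn₂.le
    calc ((2 : ℝ) ^ (k + 1)) ^ β * g (2 ^ (k + 1))
        = 2 * 2 ^ β * (2 ^ k * (((2 : ℝ) ^ k) ^ β / 2 ^ (k + 1) * g (2 ^ (k + 1)))) := by
          rw [pow_succ, Real.mul_rpow (by positivity) (by positivity)]
          field_simp
      _ ≤ _ := by
          gcongr
          simpa [pow_succ, mul_two] using Finset.card_nsmul_le_sum _ _ _ hterm
  have hsum := summable_sum_Ico_of_monotone (fun n ↦ by have := hg₀ n; positivity) hs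
    (pow_right_mono₀ one_le_two : Monotone fun k ↦ 2 ^ k)
  refine (summable_nat_add_iff 1).1 (.of_nonneg_of_le (fun k ↦ ?_) hblock (hsum.mul_left _))
  have := hg₀ (2 ^ (k + 1))
  positivity

theorem finite_setOf_abs_sub_div_le {ι : Type*} [Finite ι] (x : ι → ℝ) (N : ℕ) (B : ℝ) :
    {pq : (ι → ℤ) × ℕ | 0 < pq.2 ∧ pq.2 < N ∧ ∀ i, |x i - pq.1 i / pq.2| ≤ B}.Finite := by
  have hbox (q : ℕ) : (Set.univ.pi fun i ↦ Set.Icc ⌈(x i - B) * q⌉ ⌊(x i + B) * q⌋).Finite :=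
    .pi fun _ ↦ Set.finite_Icc _ _
  refine ((Set.finite_Iio N).biUnion fun q _ ↦ (hbox q).prod (Set.finite_singleton q)).subset ?_
  rintro ⟨z, q⟩ ⟨hq, hqN, hz⟩
  have hq' : (0 : ℝ) < q := by exact_mod_cast hq
  refine Set.mem_biUnion hqN ⟨fun i _ ↦ ⟨Int.ceil_le.2 ?_, Int.le_floor.2 ?_⟩, rfl⟩
  · rw [← le_div_iff₀ hq']
    linarith [(abs_le.1 (hz i)).2]
  · rw [← div_le_iff₀ hq']
    linarith [(abs_le.1 (hz i)).1]

theorem frequently_mem_nearRat_of_mem_WApprox {d : ℕ} {Ψ : ℕ → ℝ} (hΨ : Antitone Ψ)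
    {x : EuclideanSpace ℝ (Fin d)} (hx : x ∈ WApprox d Ψ) :
    ∃ᶠ k : ℕ in atTop, x ∈ nearRat d (2 ^ (k + 1)) (Ψ (2 ^ k)) := by
  refine frequently_atTop.2 fun K ↦ ?_
  obtain ⟨⟨z, q⟩, ⟨hq, hz⟩, hzq⟩ :=
    (hx.sdiff (finite_setOf_abs_sub_div_le x (2 ^ K) (Ψ 0))).nonempty
  have hqK : 2 ^ K ≤ q := not_lt.1 fun hqK ↦
    hzq ⟨hq, hqK, fun i ↦ (hz i).trans (hΨ q.zero_le)⟩
  refine ⟨Nat.log 2 q, Nat.le_log_of_pow_le one_lt_two hqK, z, q, hq, ?_,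
    fun i ↦ (hz i).trans (hΨ (Nat.pow_log_le_self 2 hq.ne'))⟩
  exact_mod_cast (Nat.lt_pow_succ_log_self one_lt_two q).le

theorem measure_WApprox_eq_zero {d : ℕ} {μ : Measure (EuclideanSpace ℝ (Fin d))} {α C : ℝ}
    (hα : 0 < α) (hμ : ∀ Q δ : ℝ, 1 ≤ Q → 0 < δ →
      μ (nearRat d Q δ) ≤ ENNReal.ofReal (C * (δ * Q ^ ((d + 1) / d : ℝ)) ^ α))
    {Ψ : ℕ → ℝ} (hΨ₀ : ∀ n, 0 < Ψ n) (hΨ : Antitone Ψ)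
    (hs : Summable fun n : ℕ ↦ (n : ℝ) ^ (α * (d + 1) / d - 1) * Ψ n ^ α) :
    μ (WApprox d Ψ) = 0 := by
  set β : ℝ := α * (d + 1) / d
  have hcond : Summable fun k : ℕ ↦ ((2 : ℝ) ^ k) ^ β * Ψ (2 ^ k) ^ α :=
    summable_two_pow_rpow_mul (fun n ↦ (Real.rpow_pos_of_pos (hΨ₀ n) α).le)
      (fun m n hmn ↦ Real.rpow_le_rpow (hΨ₀ n).le (hΨ hmn) hα.le) (by positivity) hs
  have hle (k : ℕ) : μ (nearRat d (2 ^ (k + 1)) (Ψ (2 ^ k))) ≤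
      ENNReal.ofReal (C * 2 ^ β * (((2 : ℝ) ^ k) ^ β * Ψ (2 ^ k) ^ α)) := by
    refine (hμ _ _ (one_le_pow₀ one_le_two) (hΨ₀ _)).trans_eq (congrArg _ ?_)
    have hβ : (d + 1) / d * α = β := by ring
    rw [Real.mul_rpow (hΨ₀ _).le (by positivity), ← Real.rpow_mul (by positivity), hβ, pow_succ,
      Real.mul_rpow (by positivity) (by positivity)]
    ring
  have hfin : ∑' k : ℕ, μ (nearRat d (2 ^ (k + 1)) (Ψ (2 ^ k))) ≠ ⊤ :=
    ne_top_of_le_ne_top (hcond.mul_left _).tsum_ofReal_ne_top (ENNReal.tsum_le_tsum hle)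
  refine measure_mono_null (fun x hx ↦ ?_) (measure_limsup_atTop_eq_zero hfin)
  exact mem_limsup_iff_frequently_mem.2 (frequently_mem_nearRat_of_mem_WApprox hΨ hx)

end BorelCantelli

/-- Diophantine statement for affinely irreducible self-similar measures on ℝ^d. -/
theorem self_similar_WPsi_null
    (d : ℕ) (hd : 0 < d) {A : Type*} [Fintype A]
    (φ : A → EuclideanSpace ℝ (Fin d) → EuclideanSpace ℝ (Fin d))
    (hΦ : IsSelfSimilarIFS φ) (hirr : AffinelyIrreducible φ)
    (p : A → ℝ) (hp : ∀ a, 0 < p a) (hp1 : ∑ a, p a = 1)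
    (μ : Measure (EuclideanSpace ℝ (Fin d))) [IsProbabilityMeasure μ]
    (hstat : μ = ∑ a, ENNReal.ofReal (p a) • Measure.map (φ a) μ) :
    ∃ α : ℝ, 0 < α ∧
      ∀ Ψ : ℕ → ℝ, (∀ n, 0 < Ψ n) → Antitone Ψ →
        (Summable fun n : ℕ => (n : ℝ) ^ (α * ((d : ℝ) + 1) / d - 1) * Ψ n ^ α) →
        μ (WApprox d Ψ) = 0 := by
  have : NeZero d := ⟨hd.ne'⟩
  choose r hr using hΦ.2.1
  choose f hf hf₁ using fun a ↦ (hr a).exists_dilation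
  obtain rfl : (fun a ↦ ⇑(f a)) = φ := funext hf
  have hμ : IsSelfSimilarMeasure f (fun a ↦ ENNReal.ofReal (p a)) μ :=
    { ratio_lt_one := hf₁
      weight_ne_zero := fun a ↦ (ENNReal.ofReal_pos.2 (hp a)).ne'
      sum_weight := by
        rw [← ENNReal.ofReal_sum_of_nonneg fun a _ ↦ (hp a).le, hp1, ENNReal.ofReal_one]
      eq_sum_map := hstat }
  obtain ⟨α, C, hα, hC⟩ := hμ.exists_measure_nearRat_le_rpow hirr hd
  exact ⟨α, hα, fun Ψ hΨ₀ hΨ hs ↦ measure_WApprox_eq_zero hα hC hΨ₀ hΨ hs⟩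
end
end
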